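/- In the ring ℤ of integers (P = rational primes, norm = absolute value), for every integer h ≥ 2 and real a, the proportion of h-free integers n ≤ x with (ω(n) − log log n)/√(log log n) ≤ a tends to Φ(a) as x → ∞, where ω(n) is the number of distinct prime factors of n. -/

import Mathlib

open Filter

/-- The standard Gaussian distribution function `Φ`. -/
noncomputable def gaussCDF (γ : ℝ) : ℝ :=
  (Real.sqrt (2 * Real.pi))⁻¹ * ∫ u in Set.Iic γ, Real.exp (-u ^ 2 / 2)

/-!
The proof is by characteristic functions. Write `χ_t(n) = exp(i t (ω(n) - log log n) / √(log log n))`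
and `φ(t) = exp(-t²/2)`.

The core is a version of the theorem along the multiples of an arbitrary fixed `q`: the sum of
`χ_t(n) - φ(t)` over the `n ≤ N` divisible by `q` is `o(N)` (`tendsto_mean_multiples`). Count first only
the primes up to `y = N ^ (1 / (2 log log N))` that do not divide `q`. For this truncated count `ω_P`, expand
`exp(iθ ω_P) = (1 + u) ^ ω_P`, where `u = exp(iθ) - 1`, in binomial coefficients `ω_P.choose k` and stop at
`k ≈ log log N`. Each retained average is a count of multiples of products of at most `log log N`
primes below `y`, hence known up to `O(√N)` in total up to logarithms; and the omitted terms are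
negligible because `θ = t / √(log log N)` tends to zero (`norm_sum_pow_omegaIn_sub_le`). What remains is the
Euler product `∏ (1 + u / p)`, the characteristic function of a sum of independent Bernoulli variables. It
is close to that of a Poisson variable of parameter `∑ 1 / p`, which by Mertens' second theorem
(`mertens_second`) is `log log N + o(√(log log N))`; its normalisation is therefore asymptotically
Gaussian (`tendsto_poisson_charFun`). Reinstating the other primes, of which an integer has on
average only `O(log log log N)`, and replacing `log log N` by `log log n` changes the characters by `o(1)` on
average (`tendsto_mean_truncation`).

Since the indicator of `h`-free integers is, up to a set of density `O(1 / z)`, a finite linear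
combination of indicators of multiples of `∏ p ^ h` with `p ≤ z`, the same `o(N)` holds on the `h`-free integers
(`tendsto_mean_hfree`). These have positive lower density (`quarter_le_card_hfreeUpTo`), so the
characteristic functions of the normalised counts on them converge to `φ`, and Lévy's continuity
theorem gives convergence of the distribution functions (`tendsto_hfree_distribution`).
-/

namespace ErdosKacHFree

open Topology

/-! ### Mertens' second theorem -/

open Finset in
lemma log_factorial_eq (n : ℕ) :
    Real.log (n.factorial : ℝ)
      = ∑ p ∈ Nat.primesLE n, (n.factorial.factorization p : ℝ) * Real.log p := by
  have h1 : (n.factorial.factorization.support) ⊆ Nat.primesLE n := by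
    intro p hp
    rw [Nat.support_factorization, Nat.mem_primeFactors] at hp
    exact Nat.mem_primesLE.2 ⟨(hp.1.dvd_factorial).1 hp.2.1, hp.1⟩
  conv_lhs => rw [← Nat.prod_factorization_pow_eq_self n.factorial_ne_zero]
  rw [Finsupp.prod_of_support_subset _ h1 _ (by simp)]
  push_cast
  rw [Real.log_prod]
  · simp [Real.log_pow]
  · intro p hp
    have := (Nat.prime_of_mem_primesLE hp).pos
    positivity

/-- The sum `∑ log p / p` over the primes `p ≤ n`. -/
noncomputable def primeLogSum (n : ℕ) : ℝ := ∑ p ∈ Nat.primesLE n, Real.log p / p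

/-- The sum `∑ 1 / p` over the primes `p ≤ n`. -/
noncomputable def primeRecipSum (n : ℕ) : ℝ := ∑ p ∈ Nat.primesLE n, (1 / p : ℝ)

/-- Upper half of Mertens' first theorem: each prime `p` occurs at least `n / p - 1` times in `n!`,
and the loss `∑ log p` is absorbed by Chebyshev's bound. -/
lemma primeLogSum_le {n : ℕ} (hn : n ≠ 0) : primeLogSum n ≤ Real.log n + Real.log 4 := by
  have h1 : (n : ℝ) * primeLogSum n - Chebyshev.theta n ≤ Real.log (n.factorial : ℝ) := by
    rw [log_factorial_eq, Chebyshev.theta_eq_sum_primesLE_log, primeLogSum, Finset.mul_sum,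
      ← Finset.sum_sub_distrib]
    refine Finset.sum_le_sum fun p hp => ?_
    have hpp := Nat.prime_of_mem_primesLE hp
    have h0 : n / p ≤ n.factorial.factorization p := by
      rw [Nat.factorization_factorial hpp (b := Nat.log p n + 2) (by omega)]
      have := Finset.single_le_sum (f := fun i => n / p ^ i) (s := Finset.Ico 1 (Nat.log p n + 2))
        (fun _ _ => Nat.zero_le _) (a := 1) (by simp)
      simpa using this
    have h2 : (n : ℝ) / p - 1 ≤ (n.factorial.factorization p : ℝ) := by
      have h3 : (n : ℝ) / p < (n / p : ℕ) + 1 := by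
        rw [← Nat.floor_div_eq_div (K := ℝ)]
        exact Nat.lt_floor_add_one _
      have h4 : ((n / p : ℕ) : ℝ) ≤ n.factorial.factorization p := by exact_mod_cast h0
      linarith
    have hl : 0 ≤ Real.log p := Real.log_natCast_nonneg p
    have := mul_le_mul_of_nonneg_right h2 hl
    calc _ = ((n : ℝ) / p - 1) * Real.log p := by ring
      _ ≤ _ := this
  have h2 : Chebyshev.theta n ≤ Real.log 4 * n := Chebyshev.theta_le_log4_mul_x (by positivity)
  have h3 : Real.log (n.factorial : ℝ) ≤ n * Real.log n := by
    rw [← Real.log_pow]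
    apply Real.log_le_log (by positivity)
    exact_mod_cast Nat.factorial_le_pow n
  have hn' : (0 : ℝ) < n := by positivity
  have : (n : ℝ) * primeLogSum n ≤ n * (Real.log n + Real.log 4) := by linarith
  exact le_of_mul_le_mul_left this hn'

/-- Lower half of Mertens' first theorem: `p` occurs at most `n / (p - 1)` times in `n!`, and the
excess `∑ log p / (p (p - 1))` converges. -/
lemma le_primeLogSum : ∃ C : ℝ, ∀ n : ℕ, n ≠ 0 → Real.log n - C ≤ primeLogSum n := by
  have hs : Summable (fun n : ℕ => ((n : ℝ) ^ (3 / 2 : ℝ))⁻¹) :=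
    Real.summable_nat_rpow_inv.2 (by norm_num)
  refine ⟨1 + 4 * ∑' n : ℕ, ((n : ℝ) ^ (3 / 2 : ℝ))⁻¹, fun n hn => ?_⟩
  set A := ∑' n : ℕ, ((n : ℝ) ^ (3 / 2 : ℝ))⁻¹ with hA
  have hn' : (0 : ℝ) < n := by positivity
  have h1 : Real.log (n.factorial : ℝ) ≤ n * primeLogSum n + n * (4 * A) := by
    have h4 : ∑ p ∈ Nat.primesLE n, ((p : ℝ) ^ (3 / 2 : ℝ))⁻¹ ≤ A :=
      hs.sum_le_tsum _ (fun _ _ => by positivity)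
    rw [log_factorial_eq, primeLogSum, Finset.mul_sum]
    refine le_trans ?_ (add_le_add_right (mul_le_mul_of_nonneg_left
      (mul_le_mul_of_nonneg_left h4 (by norm_num)) hn'.le) _)
    rw [Finset.mul_sum, Finset.mul_sum, ← Finset.sum_add_distrib]
    refine Finset.sum_le_sum fun p hp => ?_
    have hpp := Nat.prime_of_mem_primesLE hp
    have hp2 : (2 : ℝ) ≤ p := by exact_mod_cast hpp.two_le
    have h5 : (n.factorial.factorization p : ℝ) ≤ n / (p - 1) := by
      have := Nat.factorization_factorial_le_div_pred hpp n
      calc (n.factorial.factorization p : ℝ) ≤ (n / (p - 1) : ℕ) := by exact_mod_cast this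
        _ ≤ (n : ℝ) / ((p - 1 : ℕ) : ℝ) := Nat.cast_div_le
        _ = _ := by rw [Nat.cast_sub hpp.one_lt.le]; simp
    have hl : 0 ≤ Real.log p := Real.log_natCast_nonneg p
    have hl2 : Real.log p ≤ 2 * (p : ℝ) ^ (1 / 2 : ℝ) := by
      have := Real.log_le_rpow_div (x := p) (by positivity) (ε := 1 / 2) (by norm_num)
      linarith
    have hp0 : (0 : ℝ) < p := by linarith
    have hp1 : (0 : ℝ) < (p : ℝ) - 1 := by linarith
    have hsplit : (p : ℝ) ^ (3 / 2 : ℝ) = p * (p : ℝ) ^ (1 / 2 : ℝ) := by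
      rw [← Real.rpow_one_add' hp0.le (by norm_num)]; norm_num
    have hsq : (p : ℝ) ^ (1 / 2 : ℝ) * (p : ℝ) ^ (1 / 2 : ℝ) = p := by
      rw [← Real.rpow_add hp0]; norm_num
    have hr : 0 < (p : ℝ) ^ (1 / 2 : ℝ) := by positivity
    set r := (p : ℝ) ^ (1 / 2 : ℝ)
    calc (n.factorial.factorization p : ℝ) * Real.log p ≤ n / (p - 1) * Real.log p := by gcongr
      _ = n * (Real.log p / p) + n * (Real.log p / (p * (p - 1))) := by field_simp; ring
      _ ≤ n * (Real.log p / p) + n * ((2 * r) / (p * (p / 2))) := by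
          gcongr; linarith
      _ = _ := by
          rw [hsplit]; congr 2
          have : (p : ℝ) * (p / 2) = p * (r * r) / 2 := by rw [hsq]; ring
          rw [this]; field_simp; norm_num
  have h2 : n * Real.log n - n ≤ Real.log (n.factorial : ℝ) := by
    have := Stirling.le_log_factorial_stirling hn
    have h6 : 0 ≤ Real.log n := Real.log_natCast_nonneg n
    have h7 : 0 ≤ Real.log (2 * Real.pi) := Real.log_nonneg (by linarith [Real.pi_gt_three])
    linarith
  have : (n : ℝ) * (Real.log n - (1 + 4 * A)) ≤ n * primeLogSum n := by linarith
  exact le_of_mul_le_mul_left this hn'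

/-- **Mertens' second theorem**, up to a bounded error. Partial summation is carried out as an
induction showing that `∑ 1/p - (∑ log p / p) / log n - log log n` changes at each step by at most
a constant times `1 / log n - 1 / log (n + 1)`. -/
lemma mertens_second : ∃ C : ℝ, 0 ≤ C ∧ ∀ n : ℕ, 2 ≤ n →
    |primeRecipSum n - Real.log (Real.log n)| ≤ C := by
  obtain ⟨C1, hC1⟩ := le_primeLogSum
  set B := max C1 (Real.log 4) with hB
  have hB0 : 0 ≤ B := le_max_of_le_right (Real.log_nonneg (by norm_num))
  have hR : ∀ n : ℕ, n ≠ 0 → |primeLogSum n - Real.log n| ≤ B := by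
    intro n hn
    rw [abs_le]
    have := hC1 n hn
    have := primeLogSum_le hn
    constructor
    · linarith [le_max_left C1 (Real.log 4)]
    · linarith [le_max_right C1 (Real.log 4)]
  set E : ℕ → ℝ := fun n => primeRecipSum n - primeLogSum n / Real.log n
    - Real.log (Real.log n) with hE
  have hlog2 : 0 < Real.log 2 := Real.log_pos (by norm_num)
  have hstep : ∀ n : ℕ, 2 ≤ n →
      |E (n + 1) - E n| ≤ (B + 1) * (1 / Real.log n - 1 / Real.log (n + 1 : ℕ)) := by
    intro n hn
    have hn1 : (2 : ℝ) ≤ n := by exact_mod_cast hn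
    have hx : 0 < Real.log n := Real.log_pos (by linarith)
    have hy : Real.log n < Real.log (n + 1 : ℕ) :=
      Real.log_lt_log (by linarith) (by push_cast; linarith)
    have hd : Real.log (n + 1 : ℕ) - Real.log n ≤ 1 := by
      rw [← Real.log_div (by positivity) (by positivity)]
      refine (Real.log_le_sub_one_of_pos (by positivity)).trans ?_
      push_cast
      rw [add_div, div_self (by positivity)]
      have : 1 / (n : ℝ) ≤ 1 := by rw [div_le_one (by positivity)]; linarith
      linarith
    have hR' := hR n (by omega)
    set x := Real.log n
    set y := Real.log (n + 1 : ℕ)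
    have hy0 : 0 < y := hx.trans hy
    -- the new prime contributes equally to both sums, once the second is divided by `y`
    have hPQ : primeRecipSum (n + 1) - primeLogSum (n + 1) / y
        = primeRecipSum n - primeLogSum n / y := by
      unfold primeRecipSum primeLogSum
      rw [Nat.primesLE_succ]
      split_ifs with hp
      · rw [Finset.sum_insert (Nat.notMem_primesLE n), Finset.sum_insert (Nat.notMem_primesLE n)]
        have : Real.log ((n + 1 : ℕ) : ℝ) = y := rfl
        rw [this]
        field_simp
        ring
      · rfl
    have hmain : E (n + 1) - E n
        = (1 - x / y + Real.log (x / y)) + (primeLogSum n - x) * (1 / x - 1 / y) := by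
      simp only [hE]
      rw [Real.log_div hx.ne' hy0.ne']
      change primeRecipSum (n + 1) - primeLogSum (n + 1) / y - Real.log y -
        (primeRecipSum n - primeLogSum n / x - Real.log x) = _
      rw [hPQ]
      field_simp
      ring
    have hu : Real.log (x / y) ≤ x / y - 1 := Real.log_le_sub_one_of_pos (by positivity)
    have hl : 1 - y / x ≤ Real.log (x / y) := by
      have := Real.one_sub_inv_le_log_of_pos (x := x / y) (by positivity)
      rwa [inv_div] at this
    have hdiff : 0 ≤ 1 / x - 1 / y := by
      rw [sub_nonneg]; exact one_div_le_one_div_of_le hx hy.le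
    have hkey : x / y + y / x - 2 ≤ 1 / x - 1 / y := by
      have : x / y + y / x - 2 = (y - x) * (1 / x - 1 / y) := by field_simp; ring
      rw [this]
      nlinarith
    have h1 : |1 - x / y + Real.log (x / y)| ≤ 1 / x - 1 / y := by
      rw [abs_le]; constructor <;> linarith
    rw [hmain]
    refine (abs_add_le _ _).trans ?_
    rw [abs_mul, abs_of_nonneg hdiff]
    nlinarith
  have hind : ∀ n : ℕ, 2 ≤ n →
      |E n| ≤ |E 2| + (B + 1) * (1 / Real.log 2 - 1 / Real.log n) := by
    intro n hn
    induction n, hn using Nat.le_induction with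
    | base => simp
    | succ n hn ih =>
      have h1 := hstep n hn
      have h2 := abs_add_le (E (n + 1) - E n) (E n)
      rw [sub_add_cancel] at h2
      linarith
  refine ⟨|E 2| + (B + 1) * (1 / Real.log 2) + (1 + B / Real.log 2), by positivity, fun n hn => ?_⟩
  have hn1 : (2 : ℝ) ≤ n := by exact_mod_cast hn
  have hx2 : Real.log 2 ≤ Real.log n := Real.log_le_log (by norm_num) hn1
  have hx : 0 < Real.log n := hlog2.trans_le hx2
  have h1 := hind n hn
  have h2 : |primeLogSum n / Real.log n| ≤ 1 + B / Real.log 2 := by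
    have : primeLogSum n / Real.log n = 1 + (primeLogSum n - Real.log n) / Real.log n := by
      field_simp; ring
    rw [this]
    refine (abs_add_le _ _).trans ?_
    rw [abs_one, abs_div, abs_of_pos hx]
    gcongr
    exact hR n (by omega)
  have h3 : primeRecipSum n - Real.log (Real.log n) = E n + primeLogSum n / Real.log n := by
    simp only [hE]; ring
  rw [h3]
  refine (abs_add_le _ _).trans ?_
  have : 0 ≤ (B + 1) * (1 / Real.log n) := by positivity
  linarith

/-! ### The truncated sieve -/

/-- The number of primes of the finite set `P` that divide `n`. -/
def omegaIn (P : Finset ℕ) (n : ℕ) : ℕ := (P.filter (· ∣ n)).card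

/-- Truncating the binomial expansion of `(1 + u) ^ n` at order `K` costs no more than the first
omitted term, as soon as `‖1 + u‖ ≤ 1`. -/
lemma norm_binomial_truncation_le (u : ℂ) (hu : ‖1 + u‖ ≤ 1) (n K : ℕ) :
    ‖(1 + u) ^ n - ∑ k ∈ Finset.range K, (n.choose k : ℂ) * u ^ k‖
      ≤ (n.choose K : ℝ) * ‖u‖ ^ K := by
  induction n generalizing K with
  | zero =>
    cases K with
    | zero => simp
    | succ K => simp [Finset.sum_range_succ']
  | succ n ih =>
    cases K with
    | zero => simpa using pow_le_one₀ (norm_nonneg _) hu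
    | succ K =>
      have h1 : ∑ k ∈ Finset.range (K + 1), ((n + 1).choose k : ℂ) * u ^ k
          = (1 + u) * (∑ k ∈ Finset.range (K + 1), (n.choose k : ℂ) * u ^ k)
            - (n.choose K : ℂ) * u ^ (K + 1) := by
        have h2 : u * (∑ k ∈ Finset.range (K + 1), (n.choose k : ℂ) * u ^ k)
            = ∑ k ∈ Finset.range K, (n.choose k : ℂ) * u ^ (k + 1)
              + (n.choose K : ℂ) * u ^ (K + 1) := by
          rw [Finset.sum_range_succ, mul_add, Finset.mul_sum]
          congr 1
          · exact Finset.sum_congr rfl fun k _ => by ring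
          · ring
        rw [add_mul, h2, Finset.sum_range_succ', Finset.sum_range_succ' (fun k => (n.choose k : ℂ) * u ^ k)]
        simp only [Nat.choose_succ_succ, Nat.cast_add, add_mul, Finset.sum_add_distrib]
        simp
        ring
      rw [h1]
      have h3 : (1 + u) ^ (n + 1) - ((1 + u) * (∑ k ∈ Finset.range (K + 1), (n.choose k : ℂ) * u ^ k)
            - (n.choose K : ℂ) * u ^ (K + 1))
          = (1 + u) * ((1 + u) ^ n - ∑ k ∈ Finset.range (K + 1), (n.choose k : ℂ) * u ^ k)
            + (n.choose K : ℂ) * u ^ (K + 1) := by ring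
      rw [h3]
      refine (norm_add_le _ _).trans ?_
      rw [norm_mul, norm_mul, norm_pow, Complex.norm_natCast, Nat.choose_succ_succ]
      push_cast
      have := ih (K + 1)
      have h4 := mul_le_mul hu this (norm_nonneg _) zero_le_one
      linarith

lemma card_multiples_Icc (N d : ℕ) : ((Finset.Icc 1 N).filter (d ∣ ·)).card = N / d := by
  rw [← Nat.Ioc_filter_dvd_card_eq_div N d]; rfl

/-- The factorial moments of `omegaIn P` over the multiples of `q` count the multiples of `q` times a
product of `k` distinct primes of `P`. -/
lemma sum_choose_omegaIn {P : Finset ℕ} (hP : ∀ p ∈ P, p.Prime) {q : ℕ}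
    (hq : ∀ p ∈ P, ¬ p ∣ q) (N k : ℕ) :
    ∑ n ∈ (Finset.Icc 1 N).filter (q ∣ ·), (omegaIn P n).choose k
      = ∑ S ∈ P.powersetCard k, N / (q * ∏ p ∈ S, p) := by
  have h1 : ∀ n, (omegaIn P n).choose k
      = ∑ S ∈ P.powersetCard k, if (∏ p ∈ S, p) ∣ n then 1 else 0 := by
    intro n
    rw [omegaIn, ← Finset.card_powersetCard, ← Finset.sum_filter, ← Finset.card_eq_sum_ones]
    congr 1
    ext S
    simp only [Finset.mem_powersetCard, Finset.mem_filter]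
    constructor
    · rintro ⟨h1, h2⟩
      refine ⟨⟨fun p hp => (Finset.mem_filter.1 (h1 hp)).1, h2⟩, ?_⟩
      refine Finset.prod_primes_dvd n ?_ ?_
      · exact fun p hp => (hP p (Finset.mem_filter.1 (h1 hp)).1).prime
      · exact fun p hp => (Finset.mem_filter.1 (h1 hp)).2
    · rintro ⟨⟨h1, h2⟩, h3⟩
      exact ⟨fun p hp => Finset.mem_filter.2 ⟨h1 hp, (Finset.dvd_prod_of_mem _ hp).trans h3⟩, h2⟩
  simp_rw [h1]
  rw [Finset.sum_comm]
  refine Finset.sum_congr rfl fun S hS => ?_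
  rw [← card_multiples_Icc, ← Finset.sum_filter, Finset.filter_filter, ← Finset.card_eq_sum_ones]
  congr 1
  ext n
  simp only [Finset.mem_filter]
  have hcop : Nat.Coprime q (∏ p ∈ S, p) := by
    refine Nat.Coprime.prod_right fun p hp => ?_
    have hpP := (Finset.mem_powersetCard.1 hS).1 hp
    exact ((Nat.Prime.coprime_iff_not_dvd (hP p hpP)).2 (hq p hpP)).symm
  constructor
  · rintro ⟨h1, h2, h3⟩
    exact ⟨h1, hcop.mul_dvd_of_dvd_of_dvd h2 h3⟩
  · rintro ⟨h1, h2⟩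
    exact ⟨h1, (Dvd.intro _ rfl).trans h2, (Dvd.intro_left _ rfl).trans h2⟩

/-- The `k`-th elementary symmetric function of the reciprocals of the elements of `P`. -/
noncomputable def esymmRecip (P : Finset ℕ) (k : ℕ) : ℝ :=
  ∑ S ∈ P.powersetCard k, ∏ p ∈ S, (1 / p : ℝ)

lemma esymmRecip_nonneg (P : Finset ℕ) (k : ℕ) : 0 ≤ esymmRecip P k :=
  Finset.sum_nonneg fun _ _ => Finset.prod_nonneg fun _ _ => by positivity

lemma prod_one_add_eq (P : Finset ℕ) (z : ℂ) :
    ∏ p ∈ P, (1 + z / p) = ∑ k ∈ Finset.range (P.card + 1), (esymmRecip P k : ℂ) * z ^ k := by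
  rw [Finset.prod_one_add, Finset.sum_powerset]
  refine Finset.sum_congr rfl fun k _ => ?_
  rw [esymmRecip]
  push_cast
  rw [Finset.sum_mul]
  refine Finset.sum_congr rfl fun S hS => ?_
  rw [← (Finset.mem_powersetCard.1 hS).2, ← Finset.prod_const, ← Finset.prod_mul_distrib]
  exact Finset.prod_congr rfl fun p _ => by ring

lemma sum_esymmRecip_le (P : Finset ℕ) {z : ℝ} (hz : 0 ≤ z) :
    ∑ k ∈ Finset.range (P.card + 1), esymmRecip P k * z ^ k
      ≤ Real.exp (z * ∑ p ∈ P, (1 / p : ℝ)) := by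
  have h := prod_one_add_eq P (z : ℂ)
  have h' : ∏ p ∈ P, (1 + z / p : ℝ)
      = ∑ k ∈ Finset.range (P.card + 1), esymmRecip P k * z ^ k := by
    exact_mod_cast h
  rw [← h', Finset.mul_sum, Real.exp_sum]
  refine Finset.prod_le_prod (fun p _ => by positivity) fun p _ => ?_
  have := Real.add_one_le_exp (z * (1 / p))
  rw [mul_one_div] at this ⊢
  linarith

lemma esymmRecip_eq_zero {P : Finset ℕ} {k : ℕ} (h : P.card < k) : esymmRecip P k = 0 := by
  rw [esymmRecip, Finset.powersetCard_eq_empty.2 h, Finset.sum_empty]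

/-- Rankin's trick for the tail of the generating polynomial of `esymmRecip P`. -/
lemma esymmRecip_tail_le (P : Finset ℕ) {z : ℝ} (hz : 0 ≤ z) (K : ℕ) (s : Finset ℕ)
    (hs : ∀ k ∈ s, K ≤ k) :
    ∑ k ∈ s, esymmRecip P k * z ^ k
      ≤ Real.exp (-K + Real.exp 1 * z * ∑ p ∈ P, (1 / p : ℝ)) := by
  have h1 : ∑ k ∈ s, esymmRecip P k * z ^ k
      ≤ ∑ k ∈ s, Real.exp (-K) * (esymmRecip P k * (Real.exp 1 * z) ^ k) := by
    refine Finset.sum_le_sum fun k hk => ?_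
    have h2 : 1 ≤ Real.exp (-K) * Real.exp 1 ^ k := by
      rw [← Real.exp_nat_mul, ← Real.exp_add]
      apply Real.one_le_exp
      have : (K : ℝ) ≤ k := by exact_mod_cast hs k hk
      linarith
    have h3 : 0 ≤ esymmRecip P k * z ^ k := mul_nonneg (esymmRecip_nonneg _ _) (by positivity)
    calc _ = 1 * (esymmRecip P k * z ^ k) := by ring
      _ ≤ Real.exp (-K) * Real.exp 1 ^ k * (esymmRecip P k * z ^ k) := by gcongr
      _ = _ := by rw [mul_pow]; ring
  refine h1.trans ?_
  rw [← Finset.mul_sum, Real.exp_add]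
  gcongr
  refine le_trans ?_ (sum_esymmRecip_le P (z := Real.exp 1 * z) (by positivity))
  have hnn : ∀ k, 0 ≤ esymmRecip P k * (Real.exp 1 * z) ^ k :=
    fun k => mul_nonneg (esymmRecip_nonneg _ _) (by positivity)
  calc ∑ k ∈ s, esymmRecip P k * (Real.exp 1 * z) ^ k
      = ∑ k ∈ s with k ∈ Finset.range (P.card + 1), esymmRecip P k * (Real.exp 1 * z) ^ k := by
        rw [Finset.sum_filter]
        refine Finset.sum_congr rfl fun k _ => ?_
        split_ifs with h
        · rfl
        · rw [esymmRecip_eq_zero (by simpa using h), zero_mul]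
    _ ≤ _ := Finset.sum_le_sum_of_subset_of_nonneg
        (fun k hk => (Finset.mem_filter.1 hk).2) (fun k _ _ => hnn k)

/-- The fundamental comparison: along the multiples of `q` up to `N`, the generating function
`(1 + u) ^ ω_P(n)` averages to nearly the same value as if the events `p ∣ n`, for `p ∈ P`, were
independent with probabilities `1 / p`. -/
lemma norm_sum_pow_omegaIn_sub_le {P : Finset ℕ} (hP : ∀ p ∈ P, p.Prime) {q : ℕ} (hq0 : q ≠ 0)
    (hq : ∀ p ∈ P, ¬ p ∣ q) (N K Y : ℕ) (hK : 1 ≤ K) (hY : 1 ≤ Y) (hPY : P.card ≤ Y)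
    (u : ℂ) (hu : ‖1 + u‖ ≤ 1) (hu1 : ‖u‖ ≤ 1) :
    ‖∑ n ∈ (Finset.Icc 1 N).filter (q ∣ ·), (1 + u) ^ omegaIn P n
        - (N / q : ℂ) * ∏ p ∈ P, (1 + u / p)‖
      ≤ K * (Y : ℝ) ^ K
        + 2 * N * Real.exp (-K + Real.exp 1 * ‖u‖ * ∑ p ∈ P, (1 / p : ℝ)) := by
  set T := Real.exp (-K + Real.exp 1 * ‖u‖ * ∑ p ∈ P, (1 / p : ℝ)) with hT
  set M := (Finset.Icc 1 N).filter (q ∣ ·) with hM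
  have hq1 : (1 : ℝ) ≤ q := by exact_mod_cast Nat.one_le_iff_ne_zero.2 hq0
  have hNq : (N : ℝ) / q ≤ N := div_le_self (by positivity) hq1
  have hmain : ∀ k, (N / q : ℝ) * esymmRecip P k
      = ∑ S ∈ P.powersetCard k, (N : ℝ) / ((q * ∏ p ∈ S, p : ℕ) : ℝ) := by
    intro k
    rw [esymmRecip, Finset.mul_sum]
    refine Finset.sum_congr rfl fun S _ => ?_
    rw [Finset.prod_div_distrib]
    push_cast
    simp only [Finset.prod_const_one]
    rw [div_mul_div_comm, mul_one]
  have hcast : ∀ k, ((∑ n ∈ M, (omegaIn P n).choose k : ℕ) : ℝ)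
      = ∑ S ∈ P.powersetCard k, ((N / (q * ∏ p ∈ S, p) : ℕ) : ℝ) := by
    intro k
    rw [hM, sum_choose_omegaIn hP hq]
    push_cast
    rfl
  have hupper : ∀ k, ((∑ n ∈ M, (omegaIn P n).choose k : ℕ) : ℝ) ≤ N * esymmRecip P k := by
    intro k
    have h0 : (N / q : ℝ) * esymmRecip P k ≤ N * esymmRecip P k := by
      gcongr
      exact esymmRecip_nonneg _ _
    refine le_trans ?_ h0
    rw [hcast, hmain]
    exact Finset.sum_le_sum fun S _ => Nat.cast_div_le
  have hdiff : ∀ k, |((∑ n ∈ M, (omegaIn P n).choose k : ℕ) : ℝ) - (N / q : ℝ) * esymmRecip P k|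
      ≤ (Y : ℝ) ^ k := by
    intro k
    rw [hcast, hmain, ← Finset.sum_sub_distrib]
    refine (Finset.abs_sum_le_sum_abs _ _).trans ?_
    have h1 : ∀ S ∈ P.powersetCard k, |((N / (q * ∏ p ∈ S, p) : ℕ) : ℝ)
        - (N : ℝ) / ((q * ∏ p ∈ S, p : ℕ) : ℝ)| ≤ 1 := by
      intro S _
      rw [← Nat.floor_div_eq_div (K := ℝ), abs_sub_comm, abs_le]
      have := Nat.floor_le (a := (N : ℝ) / ((q * ∏ p ∈ S, p : ℕ) : ℝ)) (by positivity)
      have := Nat.lt_floor_add_one ((N : ℝ) / ((q * ∏ p ∈ S, p : ℕ) : ℝ))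
      constructor <;> linarith
    refine (Finset.sum_le_card_nsmul _ _ _ h1).trans ?_
    rw [Finset.card_powersetCard, nsmul_eq_mul, mul_one]
    have h2 : P.card.choose k ≤ Y ^ k := (Nat.choose_le_pow _ _).trans (Nat.pow_le_pow_left hPY k)
    exact_mod_cast h2
  -- truncate the binomial expansions at order `K`
  have e1 : ‖∑ n ∈ M, (1 + u) ^ omegaIn P n
      - ∑ k ∈ Finset.range K, ((∑ n ∈ M, (omegaIn P n).choose k : ℕ) : ℂ) * u ^ k‖ ≤ N * T := by
    have h1 : ∑ k ∈ Finset.range K, ((∑ n ∈ M, (omegaIn P n).choose k : ℕ) : ℂ) * u ^ k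
        = ∑ n ∈ M, ∑ k ∈ Finset.range K, ((omegaIn P n).choose k : ℂ) * u ^ k := by
      rw [Finset.sum_comm]
      refine Finset.sum_congr rfl fun k _ => ?_
      push_cast
      rw [Finset.sum_mul]
    rw [h1, ← Finset.sum_sub_distrib]
    refine (norm_sum_le _ _).trans ?_
    refine (Finset.sum_le_sum fun n _ => norm_binomial_truncation_le u hu _ K).trans ?_
    rw [← Finset.sum_mul]
    have h2 := esymmRecip_tail_le P (norm_nonneg u) K {K} (by simp)
    rw [Finset.sum_singleton] at h2
    have h3 := hupper K
    push_cast at h3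
    calc _ ≤ (N * esymmRecip P K) * ‖u‖ ^ K := by gcongr
      _ = N * (esymmRecip P K * ‖u‖ ^ K) := by ring
      _ ≤ _ := by gcongr
  -- replace the counts of multiples by their densities
  have e2 : ‖∑ k ∈ Finset.range K, ((∑ n ∈ M, (omegaIn P n).choose k : ℕ) : ℂ) * u ^ k
      - ∑ k ∈ Finset.range K, (N / q : ℂ) * ((esymmRecip P k : ℂ) * u ^ k)‖ ≤ K * (Y : ℝ) ^ K := by
    rw [← Finset.sum_sub_distrib]
    refine (norm_sum_le _ _).trans ?_
    have h1 : ∀ k ∈ Finset.range K, ‖((∑ n ∈ M, (omegaIn P n).choose k : ℕ) : ℂ) * u ^ k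
        - (N / q : ℂ) * ((esymmRecip P k : ℂ) * u ^ k)‖ ≤ (Y : ℝ) ^ K := by
      intro k hk
      have h2 : ((∑ n ∈ M, (omegaIn P n).choose k : ℕ) : ℂ) * u ^ k
        - (N / q : ℂ) * ((esymmRecip P k : ℂ) * u ^ k)
          = (((((∑ n ∈ M, (omegaIn P n).choose k : ℕ) : ℝ) - (N / q : ℝ) * esymmRecip P k) : ℝ) : ℂ)
            * u ^ k := by
        push_cast
        ring
      rw [h2, norm_mul, Complex.norm_real, norm_pow, Real.norm_eq_abs]
      calc _ ≤ (Y : ℝ) ^ k * 1 :=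
            mul_le_mul (hdiff k) (pow_le_one₀ (norm_nonneg _) hu1) (by positivity) (by positivity)
        _ = (Y : ℝ) ^ k := mul_one _
        _ ≤ (Y : ℝ) ^ K := by
            gcongr
            · exact_mod_cast hY
            · exact (Finset.mem_range.1 hk).le
    refine (Finset.sum_le_card_nsmul _ _ _ h1).trans ?_
    simp
  -- complete the truncated sum to the full product
  have e3 : ‖∑ k ∈ Finset.range K, (N / q : ℂ) * ((esymmRecip P k : ℂ) * u ^ k)
      - (N / q : ℂ) * ∏ p ∈ P, (1 + u / p)‖ ≤ N * T := by
    have h1 : ∏ p ∈ P, (1 + u / p)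
        = ∑ k ∈ Finset.range (K + (P.card + 1)), (esymmRecip P k : ℂ) * u ^ k := by
      rw [prod_one_add_eq]
      refine Finset.sum_subset (Finset.range_mono (by omega)) fun k _ hk => ?_
      rw [esymmRecip_eq_zero (by simpa using hk)]
      simp
    rw [h1, ← Finset.mul_sum, ← mul_sub, norm_mul,
      ← Finset.sum_range_add_sum_Ico _ (Nat.le_add_right K (P.card + 1)), sub_add_cancel_left, norm_neg]
    have h2 : ‖(N / q : ℂ)‖ ≤ N := by
      rw [norm_div, Complex.norm_natCast, Complex.norm_natCast]; exact hNq
    refine mul_le_mul h2 ?_ (norm_nonneg _) (by positivity)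
    refine (norm_sum_le _ _).trans ?_
    have h3 := esymmRecip_tail_le P (norm_nonneg u) K (Finset.Ico K (K + (P.card + 1)))
      (fun k hk => (Finset.mem_Ico.1 hk).1)
    refine le_trans (le_of_eq ?_) h3
    refine Finset.sum_congr rfl fun k _ => ?_
    rw [norm_mul, norm_pow, Complex.norm_real, Real.norm_of_nonneg (esymmRecip_nonneg _ _)]
  have key := (norm_sub_le_norm_sub_add_norm_sub (∑ n ∈ M, (1 + u) ^ omegaIn P n) _
    ((N / q : ℂ) * ∏ p ∈ P, (1 + u / p))).trans (add_le_add e1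
      ((norm_sub_le_norm_sub_add_norm_sub _ _ _).trans (add_le_add e2 e3)))
  linarith

/-! ### Poisson approximation and its Gaussian limit -/

lemma norm_prod_sub_prod_le {ι : Type*} (s : Finset ι) (f g : ι → ℂ)
    (hf : ∀ i ∈ s, ‖f i‖ ≤ 1) (hg : ∀ i ∈ s, ‖g i‖ ≤ 1) :
    ‖∏ i ∈ s, f i - ∏ i ∈ s, g i‖ ≤ ∑ i ∈ s, ‖f i - g i‖ := by
  classical
  induction s using Finset.induction_on with
  | empty => simp
  | insert a s ha ih =>
    rw [Finset.prod_insert ha, Finset.prod_insert ha, Finset.sum_insert ha]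
    have h1 : f a * ∏ i ∈ s, f i - g a * ∏ i ∈ s, g i
        = (f a - g a) * ∏ i ∈ s, f i + g a * (∏ i ∈ s, f i - ∏ i ∈ s, g i) := by ring
    have h2 : ‖∏ i ∈ s, f i‖ ≤ 1 := by
      rw [norm_prod]
      exact Finset.prod_le_one (fun _ _ => norm_nonneg _)
        (fun i hi => hf i (Finset.mem_insert_of_mem hi))
    have h3 := ih (fun i hi => hf i (Finset.mem_insert_of_mem hi))
      (fun i hi => hg i (Finset.mem_insert_of_mem hi))
    have h4 := hg a (Finset.mem_insert_self a s)
    rw [h1]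
    refine (norm_add_le _ _).trans ?_
    rw [norm_mul, norm_mul]
    have h5 := mul_le_mul_of_nonneg_left h2 (norm_nonneg (f a - g a))
    have h6 := mul_le_mul h4 h3 (norm_nonneg _) zero_le_one
    linarith

/-- The sum of `1 / n ^ 2`. -/
noncomputable def recipSqSum : ℝ := ∑' n : ℕ, ((n : ℝ) ^ 2)⁻¹

/-- The characteristic function of the sum of independent Bernoulli variables of parameters `1 / p`
is close to that of a Poisson variable. -/
lemma norm_prod_sub_exp_le {P : Finset ℕ} (hP : ∀ p ∈ P, p.Prime) (θ : ℝ) (hθ : |θ| ≤ 1) :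
    ‖∏ p ∈ P, (1 + (Complex.exp (Complex.I * θ) - 1) / p)
        - Complex.exp ((Complex.exp (Complex.I * θ) - 1) * (∑ p ∈ P, (1 / p : ℝ) : ℝ))‖
      ≤ θ ^ 2 * recipSqSum := by
  set u := Complex.exp (Complex.I * θ) - 1 with hu
  have hu1 : ‖u‖ ≤ |θ| := Real.norm_exp_I_mul_ofReal_sub_one_le
  have hE : Complex.exp (u * (∑ p ∈ P, (1 / p : ℝ) : ℝ)) = ∏ p ∈ P, Complex.exp (u / p) := by
    rw [← Complex.exp_sum]
    congr 1
    push_cast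
    rw [Finset.mul_sum]
    exact Finset.sum_congr rfl fun p _ => by ring
  rw [hE]
  have hre : u.re ≤ 0 := by
    have h1 := Complex.re_le_norm (Complex.exp (Complex.I * θ))
    rw [Complex.norm_exp_I_mul_ofReal] at h1
    simp only [hu, Complex.sub_re, Complex.one_re]
    linarith
  refine (norm_prod_sub_prod_le P _ _ ?_ ?_).trans ?_
  · intro p hp
    have hp1 : (1 : ℝ) ≤ p := by exact_mod_cast (hP p hp).one_lt.le
    have hpc : (p : ℂ) ≠ 0 := by exact_mod_cast (hP p hp).ne_zero
    have h1 : 1 + u / p = ((1 - 1 / p : ℝ) : ℂ) + ((1 / p : ℝ) : ℂ) * Complex.exp (Complex.I * θ) := by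
      simp only [hu]; push_cast; ring
    rw [h1]
    refine (norm_add_le _ _).trans ?_
    rw [norm_mul, Complex.norm_exp_I_mul_ofReal, Complex.norm_real, Complex.norm_real,
      Real.norm_of_nonneg, Real.norm_of_nonneg]
    · linarith
    · positivity
    · rw [sub_nonneg, div_le_one (by linarith)]; exact hp1
  · intro p hp
    rw [Complex.norm_exp, Complex.div_natCast_re]
    apply Real.exp_le_one_iff.2
    exact div_nonpos_of_nonpos_of_nonneg hre (by positivity)
  · have hs : Summable (fun n : ℕ => ((n : ℝ) ^ 2)⁻¹) := Real.summable_nat_pow_inv.2 (by norm_num)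
    have h1 : ∑ p ∈ P, ((p : ℝ) ^ 2)⁻¹ ≤ recipSqSum := hs.sum_le_tsum _ (fun _ _ => by positivity)
    refine le_trans ?_ (mul_le_mul_of_nonneg_left h1 (sq_nonneg θ))
    rw [Finset.mul_sum]
    refine Finset.sum_le_sum fun p hp => ?_
    have hp1 : (1 : ℝ) ≤ p := by exact_mod_cast (hP p hp).one_lt.le
    have h2 : ‖u / p‖ ≤ |θ| / p := by
      rw [norm_div, Complex.norm_natCast]; gcongr
    have h3 : ‖u / p‖ ≤ 1 := h2.trans ((div_le_self (abs_nonneg _) hp1).trans hθ)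
    have h4 := Complex.norm_exp_sub_one_sub_id_le h3
    rw [← norm_neg]
    calc _ = ‖Complex.exp (u / p) - 1 - u / p‖ := by congr 1; ring
      _ ≤ ‖u / p‖ ^ 2 := h4
      _ ≤ (|θ| / p) ^ 2 := by gcongr
      _ = _ := by rw [div_pow, sq_abs]; rfl

/-- A Poisson variable of large parameter `G`, centred at and normalised by a quantity `l` with
`G - l = o(√l)`, is asymptotically standard Gaussian. -/
lemma tendsto_poisson_charFun {G l : ℕ → ℝ} (hl : Tendsto l atTop atTop)
    (hG : Tendsto (fun N => (G N - l N) / √(l N)) atTop (𝓝 0)) (t : ℝ) :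
    Tendsto (fun N => Complex.exp ((Complex.exp (Complex.I * (t / √(l N) : ℝ)) - 1) * (G N : ℝ))
      * Complex.exp (-(Complex.I * (t * √(l N) : ℝ)))) atTop (𝓝 (Complex.exp (-(t ^ 2 / 2 : ℝ)))) := by
  simp_rw [← Complex.exp_add]
  refine (Complex.continuous_exp.tendsto _).comp ?_
  rw [tendsto_iff_norm_sub_tendsto_zero]
  have hs : Tendsto (fun N => √(l N)) atTop atTop := Real.tendsto_sqrt_atTop.comp hl
  have hsi : Tendsto (fun N => (√(l N))⁻¹) atTop (𝓝 0) := tendsto_inv_atTop_zero.comp hs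
  have habs := hG.abs
  rw [abs_zero] at habs
  have hbound : Tendsto (fun N => (|t| + t ^ 2 * (√(l N))⁻¹ + |t| ^ 3 * ((√(l N))⁻¹) ^ 2)
        * |(G N - l N) / √(l N)| + |t| ^ 3 * (√(l N))⁻¹) atTop (𝓝 0) := by
    have h1 : Tendsto (fun N => |t| + t ^ 2 * (√(l N))⁻¹ + |t| ^ 3 * ((√(l N))⁻¹) ^ 2) atTop
        (𝓝 (|t| + t ^ 2 * 0 + |t| ^ 3 * 0 ^ 2)) :=
      (tendsto_const_nhds.add (hsi.const_mul _)).add ((hsi.pow 2).const_mul _)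
    have h2 := (h1.mul habs).add (hsi.const_mul (|t| ^ 3))
    simpa using h2
  refine squeeze_zero' (Eventually.of_forall fun _ => norm_nonneg _) ?_ hbound
  filter_upwards [hl.eventually_gt_atTop 0, hs.eventually_ge_atTop (max 1 |t|)] with N hN0 hN1
  have hs0 : 0 < √(l N) := Real.sqrt_pos.2 hN0
  have hsq : √(l N) * √(l N) = l N := Real.mul_self_sqrt hN0.le
  have hst : |t| ≤ √(l N) := (le_max_right _ _).trans hN1
  generalize √(l N) = s at *
  generalize hg : G N = g at *
  rw [← hsq]
  set θ : ℝ := t / s with hθ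
  have hts : t = θ * s := by rw [hθ]; field_simp
  have hθ1 : |θ| ≤ 1 := by rw [hθ, abs_div, abs_of_pos hs0, div_le_one hs0]; exact hst
  have hIθ : ‖Complex.I * (θ : ℂ)‖ = |θ| := by simp
  set r := Complex.exp (Complex.I * θ) - (1 + Complex.I * θ - θ ^ 2 / 2) with hr
  have hrb : ‖r‖ ≤ |θ| ^ 3 := by
    have h1 := Complex.exp_bound (x := Complex.I * θ) (by rw [hIθ]; exact hθ1) (n := 3) (by norm_num)
    rw [hIθ] at h1
    have h2 : ∑ m ∈ Finset.range 3, (Complex.I * (θ : ℂ)) ^ m / (m.factorial : ℂ)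
        = 1 + Complex.I * θ - θ ^ 2 / 2 := by
      simp [Finset.sum_range_succ, Nat.factorial, mul_pow]
      ring
    rw [h2] at h1
    refine h1.trans ?_
    have : (((3 : ℕ).succ : ℝ) * (((3 : ℕ).factorial : ℝ) * ((3 : ℕ) : ℝ))⁻¹) ≤ 1 := by
      norm_num [Nat.factorial]
    exact mul_le_of_le_one_right (by positivity) this
  have hexp : Complex.exp (Complex.I * θ) = r + (1 + Complex.I * θ - θ ^ 2 / 2) := by rw [hr]; ring
  have hid : (Complex.exp (Complex.I * θ) - 1) * (g : ℂ) + -(Complex.I * ((t * s : ℝ) : ℂ))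
      - -((t ^ 2 / 2 : ℝ) : ℂ)
      = (Complex.I * θ - θ ^ 2 / 2 + r) * ((g - s * s : ℝ) : ℂ) + r * ((s * s : ℝ) : ℂ) := by
    rw [hexp, hts]
    push_cast
    ring
  rw [hid]
  refine (norm_add_le _ _).trans ?_
  rw [norm_mul, norm_mul, Complex.norm_real, Complex.norm_real, Real.norm_eq_abs, Real.norm_eq_abs,
    abs_of_pos (mul_pos hs0 hs0)]
  have h5 : ‖Complex.I * (θ : ℂ) - θ ^ 2 / 2 + r‖ ≤ |θ| + θ ^ 2 + |θ| ^ 3 := by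
    refine (norm_add_le _ _).trans (add_le_add ((norm_sub_le _ _).trans (add_le_add hIθ.le ?_)) hrb)
    rw [norm_div, norm_pow, Complex.norm_real, Real.norm_eq_abs, sq_abs]
    have : ‖(2 : ℂ)‖ = 2 := by simp
    rw [this]
    linarith [sq_nonneg θ]
  calc _ ≤ (|θ| + θ ^ 2 + |θ| ^ 3) * |g - s * s| + |θ| ^ 3 * (s * s) := by gcongr
    _ = _ := by
      rw [hθ, abs_div, abs_div, abs_of_pos hs0]
      field_simp

/-! ### The sieve parameters -/

/-- The centring `log log N` (only meaningful for `N ≥ 3`). -/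
noncomputable def ll (N : ℕ) : ℝ := Real.log (Real.log N)

/-- The order at which the sieve is truncated, about `log log N`. -/
noncomputable def sieveOrder (N : ℕ) : ℕ := ⌈ll N⌉₊

/-- The bound on the primes retained in the truncated count, about `N ^ (1 / (2 log log N))`. -/
noncomputable def sieveLevel (N : ℕ) : ℕ := ⌊Real.exp (Real.log N / (2 * sieveOrder N))⌋₊

/-- The primes up to the sieve level that do not divide `q`. -/
noncomputable def sievePrimes (q N : ℕ) : Finset ℕ :=
  (Nat.primesLE (sieveLevel N)).filter (fun p => ¬ p ∣ q)

/-- The expected number of primes in `sievePrimes q N` dividing a random integer. -/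
noncomputable def sieveMean (q N : ℕ) : ℝ := ∑ p ∈ sievePrimes q N, (1 / p : ℝ)

lemma prime_of_mem_sievePrimes {q N p : ℕ} (hp : p ∈ sievePrimes q N) : p.Prime :=
  Nat.prime_of_mem_primesLE (Finset.mem_filter.1 hp).1

lemma not_dvd_of_mem_sievePrimes {q N p : ℕ} (hp : p ∈ sievePrimes q N) : ¬ p ∣ q :=
  (Finset.mem_filter.1 hp).2

lemma card_sievePrimes_le (q N : ℕ) : (sievePrimes q N).card ≤ sieveLevel N := by
  refine (Finset.card_filter_le _ _).trans ?_
  rw [Nat.primesLE_eq_filter_Icc_one]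
  refine (Finset.card_filter_le _ _).trans ?_
  simp

lemma tendsto_log_natCast : Tendsto (fun N : ℕ => Real.log N) atTop atTop :=
  Real.tendsto_log_atTop.comp tendsto_natCast_atTop_atTop

lemma tendsto_ll : Tendsto ll atTop atTop :=
  Real.tendsto_log_atTop.comp tendsto_log_natCast

lemma tendsto_inv_sqrt_ll : Tendsto (fun N => (√(ll N))⁻¹) atTop (𝓝 0) :=
  tendsto_inv_atTop_zero.comp (Real.tendsto_sqrt_atTop.comp tendsto_ll)

lemma tendsto_sieveOrder : Tendsto sieveOrder atTop atTop :=
  tendsto_nat_ceil_atTop.comp tendsto_ll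

lemma sieveOrder_le {N : ℕ} (h : 0 ≤ ll N) : (sieveOrder N : ℝ) ≤ ll N + 1 :=
  (Nat.ceil_lt_add_one h).le

/-- Eventually `log N` exceeds any fixed multiple of `log log N + 1`. -/
lemma eventually_ll_le_log :
    ∀ᶠ N : ℕ in atTop, 1 ≤ ll N ∧ 4 * (ll N + 1) ≤ Real.log N := by
  have h1 := Real.isLittleO_log_id_atTop.def (c := 1 / 8) (by norm_num)
  have h2 := tendsto_log_natCast.eventually h1
  filter_upwards [h2, tendsto_ll.eventually_ge_atTop 1, tendsto_log_natCast.eventually_ge_atTop 8]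
    with N hN hN1 hN2
  refine ⟨hN1, ?_⟩
  simp only [id, Real.norm_eq_abs] at hN
  rw [abs_of_nonneg (by linarith : (0 : ℝ) ≤ Real.log N)] at hN
  have := (le_abs_self _).trans hN
  rw [ll]
  linarith

/-- The sieve level is small enough for the error terms of the sieve, and large enough for its
double logarithm to be close to `log log N`. -/
lemma sieveLevel_bounds : ∀ᶠ N : ℕ in atTop,
    2 ≤ sieveLevel N ∧ sieveLevel N ≤ N ∧ (sieveLevel N : ℝ) ^ sieveOrder N ≤ √N ∧
      |ll (sieveLevel N) - ll N| ≤ Real.log (4 * (ll N + 1)) := by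
  filter_upwards [eventually_ll_le_log, tendsto_sieveOrder.eventually_ge_atTop 1,
    eventually_ge_atTop 1] with N ⟨hN1, hN2⟩ hK1 hNpos
  have hK := sieveOrder_le (by linarith : 0 ≤ ll N)
  have hK1' : (1 : ℝ) ≤ sieveOrder N := by exact_mod_cast hK1
  have hN0 : (0 : ℝ) < N := by exact_mod_cast hNpos
  have hlog : 0 < Real.log N := by linarith
  have hfl : (sieveLevel N : ℝ) ≤ Real.exp (Real.log N / (2 * sieveOrder N)) :=
    Nat.floor_le (Real.exp_pos _).le
  have hfl2 : Real.exp (Real.log N / (2 * sieveOrder N)) < sieveLevel N + 1 :=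
    Nat.lt_floor_add_one _
  set k : ℝ := (sieveOrder N : ℝ) with hk
  have hlog2 : Real.log 2 ≤ 1 := by linarith [Real.log_two_lt_d9]
  have hlog2' : 0 < Real.log 2 := Real.log_pos (by norm_num)
  -- `log N / (4 k)` is at least `log 2`
  have hq : Real.log 2 ≤ Real.log N / (4 * k) := by
    rw [le_div_iff₀ (by positivity)]; nlinarith
  have hsum : Real.log N / (2 * k) = Real.log N / (4 * k) + Real.log N / (4 * k) := by
    field_simp; norm_num
  have hY1 : 1 ≤ sieveLevel N := by
    refine Nat.floor_pos.2 (Real.one_le_exp ?_)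
    positivity
  have hY1' : (1 : ℝ) ≤ sieveLevel N := by exact_mod_cast hY1
  have hlY : Real.log N / (4 * k) ≤ Real.log (sieveLevel N) := by
    have h1 : Real.exp (Real.log N / (2 * k)) ≤ 2 * sieveLevel N := by linarith
    have h2 := Real.log_le_log (Real.exp_pos _) h1
    rw [Real.log_exp, Real.log_mul (by norm_num) (by positivity), hsum] at h2
    linarith
  have hY2 : (2 : ℝ) ≤ sieveLevel N := by
    have := hq.trans hlY
    rwa [Real.log_le_log_iff (by norm_num) (by linarith)] at this
  have hYN : (sieveLevel N : ℝ) ≤ N := by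
    refine hfl.trans ?_
    conv_rhs => rw [← Real.exp_log hN0]
    apply Real.exp_le_exp.2
    exact div_le_self hlog.le (by linarith)
  refine ⟨by exact_mod_cast hY2, by exact_mod_cast hYN, ?_, ?_⟩
  · calc (sieveLevel N : ℝ) ^ sieveOrder N
        ≤ Real.exp (Real.log N / (2 * k)) ^ sieveOrder N := by gcongr
      _ = Real.exp (Real.log N / 2) := by
          rw [← Real.exp_nat_mul, ← hk]; congr 1; field_simp
      _ = √N := by rw [← Real.log_sqrt hN0.le, Real.exp_log (Real.sqrt_pos.2 hN0)]
  · have hlogY : 0 < Real.log (sieveLevel N) := Real.log_pos (by linarith)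
    have h1 : ll (sieveLevel N) ≤ ll N :=
      Real.log_le_log hlogY (Real.log_le_log (by linarith) hYN)
    have h2 : ll N - Real.log (4 * k) ≤ ll (sieveLevel N) := by
      have := Real.log_le_log (by positivity) hlY
      rwa [Real.log_div hlog.ne' (by positivity)] at this
    have h3 : Real.log (4 * k) ≤ Real.log (4 * (ll N + 1)) :=
      Real.log_le_log (by positivity) (by linarith)
    rw [abs_of_nonpos (by linarith)]
    linarith

/-- Discarding the prime factors of `q` costs at most the number of integers up to `q`. -/
lemma sieveMean_bounds {q : ℕ} (hq : q ≠ 0) (N : ℕ) :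
    primeRecipSum (sieveLevel N) - q ≤ sieveMean q N ∧
      sieveMean q N ≤ primeRecipSum (sieveLevel N) := by
  have h1 := Finset.sum_filter_add_sum_filter_not (Nat.primesLE (sieveLevel N)) (fun p => p ∣ q)
    (fun p : ℕ => (1 / p : ℝ))
  change _ + sieveMean q N = primeRecipSum (sieveLevel N) at h1
  have h2 : ∑ p ∈ Nat.primesLE (sieveLevel N) with p ∣ q, (1 / p : ℝ) ≤ q := by
    calc ∑ p ∈ Nat.primesLE (sieveLevel N) with p ∣ q, (1 / p : ℝ)
        ≤ ∑ p ∈ Finset.Icc 1 q, (1 : ℝ) := by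
          refine (Finset.sum_le_sum_of_subset_of_nonneg (t := Finset.Icc 1 q) ?_ ?_).trans
            (Finset.sum_le_sum ?_)
          · intro p hp
            rw [Finset.mem_filter] at hp
            exact Finset.mem_Icc.2 ⟨(Nat.prime_of_mem_primesLE hp.1).one_lt.le,
              Nat.le_of_dvd (Nat.pos_of_ne_zero hq) hp.2⟩
          · intros; positivity
          · intro p hp
            have : (1 : ℝ) ≤ p := by exact_mod_cast (Finset.mem_Icc.1 hp).1
            rw [div_le_one (by linarith)]
            exact this
      _ = q := by simp
  have h3 : 0 ≤ ∑ p ∈ Nat.primesLE (sieveLevel N) with p ∣ q, (1 / p : ℝ) :=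
    Finset.sum_nonneg fun _ _ => by positivity
  constructor <;> linarith

lemma tendsto_log_ll_div_sqrt :
    Tendsto (fun N => Real.log (4 * (ll N + 1)) / √(ll N)) atTop (𝓝 0) := by
  have h0 : Tendsto (fun x : ℝ => Real.log (4 * (x + 1)) / √x) atTop (𝓝 0) := by
    have h1 : Tendsto (fun x : ℝ => Real.log x / x ^ (1 / 2 : ℝ)) atTop (𝓝 0) :=
      (isLittleO_log_rpow_atTop (by norm_num)).tendsto_div_nhds_zero
    have h2 : Tendsto (fun x : ℝ => (√x)⁻¹) atTop (𝓝 0) :=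
      tendsto_inv_atTop_zero.comp Real.tendsto_sqrt_atTop
    have h3 : Tendsto (fun x : ℝ => Real.log 8 * (√x)⁻¹ + Real.log x / x ^ (1 / 2 : ℝ)) atTop
        (𝓝 0) := by simpa using (h2.const_mul (Real.log 8)).add h1
    refine squeeze_zero' ?_ ?_ h3
    · filter_upwards [eventually_ge_atTop 1] with x hx
      exact div_nonneg (Real.log_nonneg (by linarith)) (Real.sqrt_nonneg _)
    · filter_upwards [eventually_ge_atTop 1] with x hx
      rw [← Real.sqrt_eq_rpow, ← div_eq_mul_inv, ← add_div, ← Real.log_mul (by norm_num) (by linarith)]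
      exact div_le_div_of_nonneg_right (Real.log_le_log (by linarith) (by linarith))
        (Real.sqrt_nonneg _)
  exact h0.comp tendsto_ll

/-- The mean of the truncated count is `log log N + o(√(log log N))`: lowering the bound on the primes
from `N` to the sieve level only costs `O(log log log N)`. -/
lemma tendsto_sieveMean {q : ℕ} (hq : q ≠ 0) :
    Tendsto (fun N => (sieveMean q N - ll N) / √(ll N)) atTop (𝓝 0) := by
  obtain ⟨C, hC0, hC⟩ := mertens_second
  have h1 : Tendsto (fun N => (C + q) * (√(ll N))⁻¹ + Real.log (4 * (ll N + 1)) / √(ll N)) atTop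
      (𝓝 0) := by
    simpa using (tendsto_inv_sqrt_ll.const_mul (C + q)).add tendsto_log_ll_div_sqrt
  refine squeeze_zero_norm' ?_ h1
  filter_upwards [sieveLevel_bounds] with N ⟨hY2, _, _, hll⟩
  rw [norm_div, Real.norm_eq_abs, Real.norm_of_nonneg (Real.sqrt_nonneg _), ← div_eq_mul_inv,
    ← add_div]
  gcongr
  have h2 := hC _ hY2
  obtain ⟨h3, h4⟩ := sieveMean_bounds hq N
  change |primeRecipSum (sieveLevel N) - ll (sieveLevel N)| ≤ C at h2
  rw [abs_le] at *
  constructor <;> linarith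

lemma tendsto_primeRecipSum :
    Tendsto (fun N => (primeRecipSum N - ll N) / √(ll N)) atTop (𝓝 0) := by
  obtain ⟨C, hC0, hC⟩ := mertens_second
  have h1 : Tendsto (fun N => C * (√(ll N))⁻¹) atTop (𝓝 0) := by
    simpa using tendsto_inv_sqrt_ll.const_mul C
  refine squeeze_zero_norm' ?_ h1
  filter_upwards [eventually_ge_atTop 2] with N hN
  rw [norm_div, Real.norm_eq_abs, Real.norm_of_nonneg (Real.sqrt_nonneg _), ← div_eq_mul_inv]
  gcongr
  exact hC N hN

/-- The rounding error of the sieve is negligible, since `sieveLevel N ^ sieveOrder N ≤ √N`. -/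
lemma tendsto_sieve_error :
    Tendsto (fun N : ℕ => (sieveOrder N : ℝ) * (sieveLevel N : ℝ) ^ sieveOrder N / N) atTop (𝓝 0) := by
  have h1 : Tendsto (fun N : ℕ => Real.log N / (N : ℝ) ^ (1 / 2 : ℝ)) atTop (𝓝 0) :=
    (isLittleO_log_rpow_atTop (by norm_num)).tendsto_div_nhds_zero.comp tendsto_natCast_atTop_atTop
  refine squeeze_zero' (Eventually.of_forall fun _ => by positivity) ?_ h1
  filter_upwards [sieveLevel_bounds, eventually_ll_le_log, eventually_ge_atTop 1]
    with N ⟨_, _, hY, _⟩ ⟨hN1, hN2⟩ hNpos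
  have hK := sieveOrder_le (by linarith : 0 ≤ ll N)
  have hN0 : (0 : ℝ) < N := by exact_mod_cast hNpos
  have hs : 0 < √(N : ℝ) := Real.sqrt_pos.2 hN0
  rw [← Real.sqrt_eq_rpow]
  calc (sieveOrder N : ℝ) * (sieveLevel N : ℝ) ^ sieveOrder N / N
      ≤ Real.log N * √N / N := by gcongr; linarith
    _ = Real.log N * √N / (√N * √N) := by rw [Real.mul_self_sqrt hN0.le]
    _ = Real.log N / √N := by field_simp

/-- The truncation error of the sieve is negligible: the frequency `t / √(log log N)` tends to zero, so
the `k`-th terms beyond `k = log log N` are exponentially small. -/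
lemma tendsto_sieve_tail {q : ℕ} (hq : q ≠ 0) (t : ℝ) :
    Tendsto (fun N : ℕ => Real.exp (-(sieveOrder N : ℝ)
      + Real.exp 1 * (|t| / √(ll N)) * sieveMean q N)) atTop (𝓝 0) := by
  refine Real.tendsto_exp_atBot.comp ?_
  have hs : Tendsto (fun N => √(ll N)) atTop atTop := Real.tendsto_sqrt_atTop.comp tendsto_ll
  have hM := tendsto_sieveMean hq
  refine tendsto_atBot_mono' atTop ?_ (tendsto_neg_atTop_atBot.comp hs)
  filter_upwards [tendsto_ll.eventually_gt_atTop 0,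
    hs.eventually_ge_atTop (2 * (Real.exp 1 * |t|) + 1),
    hM.eventually_le_const (show (0 : ℝ) < 1 by norm_num)] with N hN0 hN1 hN2
  have hs0 : 0 < √(ll N) := Real.sqrt_pos.2 hN0
  have hsq : √(ll N) * √(ll N) = ll N := Real.mul_self_sqrt hN0.le
  have hK : ll N ≤ sieveOrder N := Nat.le_ceil _
  have hc : 0 ≤ Real.exp 1 * |t| := by positivity
  rw [div_le_one hs0] at hN2
  simp only [Function.comp]
  set s := √(ll N)
  rw [← hsq] at hK hN2
  set c := Real.exp 1 * |t| with hcdef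
  have h1 : Real.exp 1 * (|t| / s) * sieveMean q N ≤ c + c * s := by
    calc Real.exp 1 * (|t| / s) * sieveMean q N = c / s * sieveMean q N := by
          rw [hcdef]; ring
      _ ≤ c / s * (s + s * s) := by
          gcongr
          linarith
      _ = c + c * s := by field_simp
  nlinarith

/-! ### The truncated count over multiples of `q` -/

/-- The averages of the characters of the normalised truncated count over the multiples of `q`
converge to the Gaussian characteristic function. -/
lemma tendsto_mean_sieved {q : ℕ} (hq : q ≠ 0) (t : ℝ) :
    Tendsto (fun N : ℕ => (∑ n ∈ (Finset.Icc 1 N).filter (q ∣ ·),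
      Complex.exp (Complex.I * (t * ((omegaIn (sievePrimes q N) n - ll N) / √(ll N)) : ℝ))) / N)
      atTop (𝓝 (Complex.exp (-(t ^ 2 / 2 : ℝ)) / q)) := by
  have hmain := (tendsto_poisson_charFun tendsto_ll (tendsto_sieveMean hq) t).div_const (q : ℂ)
  have hθ : Tendsto (fun N => t / √(ll N)) atTop (𝓝 0) := by
    simpa [div_eq_mul_inv] using tendsto_inv_sqrt_ll.const_mul t
  have herr : Tendsto (fun N : ℕ => (sieveOrder N : ℝ) * (sieveLevel N : ℝ) ^ sieveOrder N / N
      + 2 * Real.exp (-(sieveOrder N : ℝ) + Real.exp 1 * (|t| / √(ll N)) * sieveMean q N)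
      + (t / √(ll N)) ^ 2 * recipSqSum) atTop (𝓝 0) := by
    simpa using (tendsto_sieve_error.add ((tendsto_sieve_tail hq t).const_mul 2)).add
      ((hθ.pow 2).mul_const recipSqSum)
  refine hmain.congr_dist (squeeze_zero' (Eventually.of_forall fun _ => dist_nonneg) ?_ herr)
  have hθ1 : ∀ᶠ N in atTop, |t / √(ll N)| ≤ 1 := by
    filter_upwards [hθ.eventually (Metric.ball_mem_nhds 0 one_pos)] with N hN
    exact (mem_ball_zero_iff.1 hN).le
  filter_upwards [hθ1, tendsto_ll.eventually_gt_atTop 0, sieveLevel_bounds, eventually_ge_atTop 1,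
    tendsto_sieveOrder.eventually_ge_atTop 1] with N h1 hl ⟨hY, _⟩ hN hK
  have hs0 : 0 < √(ll N) := Real.sqrt_pos.2 hl
  have hN0 : (0 : ℝ) < N := by exact_mod_cast hN
  have hNC : (N : ℂ) ≠ 0 := by exact_mod_cast hN0.ne'
  have hqC : (q : ℂ) ≠ 0 := by exact_mod_cast hq
  have hP : ∀ p ∈ sievePrimes q N, p.Prime := fun p => prime_of_mem_sievePrimes
  set P := sievePrimes q N with hPdef
  set θ := t / √(ll N) with hθdef
  set u := Complex.exp (Complex.I * θ) - 1 with hu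
  set E := Complex.exp (-(Complex.I * (t * √(ll N) : ℝ))) with hE
  have hE1 : ‖E‖ = 1 := by
    rw [hE, show -(Complex.I * (t * √(ll N) : ℝ)) = ((-(t * √(ll N)) : ℝ) : ℂ) * Complex.I by
      push_cast; ring]
    exact Complex.norm_exp_ofReal_mul_I _
  have hu1 : 1 + u = Complex.exp (Complex.I * θ) := by rw [hu]; ring
  have hun : ‖1 + u‖ ≤ 1 := by
    rw [hu1, mul_comm, Complex.norm_exp_ofReal_mul_I]
  have huθ : ‖u‖ ≤ |θ| := Real.norm_exp_I_mul_ofReal_sub_one_le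
  have hsieve := norm_sum_pow_omegaIn_sub_le hP hq (fun p => not_dvd_of_mem_sievePrimes)
    N (sieveOrder N) (sieveLevel N) hK (by omega) (card_sievePrimes_le q N) u hun (huθ.trans h1)
  have hprod := norm_prod_sub_exp_le hP θ h1
  rw [← hu] at hprod
  have hterm : ∑ n ∈ (Finset.Icc 1 N).filter (q ∣ ·),
      Complex.exp (Complex.I * (t * ((omegaIn P n - ll N) / √(ll N)) : ℝ))
      = E * ∑ n ∈ (Finset.Icc 1 N).filter (q ∣ ·), (1 + u) ^ omegaIn P n := by
    rw [Finset.mul_sum]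
    refine Finset.sum_congr rfl fun n _ => ?_
    rw [hu1, ← Complex.exp_nat_mul, hE, ← Complex.exp_add]
    congr 1
    have : t * ((omegaIn P n - ll N) / √(ll N)) = omegaIn P n * θ - t * √(ll N) := by
      rw [hθdef, sub_div, Real.div_sqrt]; ring
    rw [this]; push_cast; ring
  rw [hterm]
  set S := ∑ n ∈ (Finset.Icc 1 N).filter (q ∣ ·), (1 + u) ^ omegaIn P n
  set R := ∏ p ∈ P, (1 + u / (p : ℂ))
  change ‖R - Complex.exp (u * (sieveMean q N : ℝ))‖ ≤ _ at hprod
  set G := Complex.exp (u * (sieveMean q N : ℝ))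
  rw [dist_comm, dist_eq_norm]
  have hsplit : E * S / N - G * E / q = E * ((S - N / q * R) / N) + E * ((R - G) / q) := by
    field_simp; ring
  rw [hsplit]
  refine (norm_add_le _ _).trans ?_
  rw [norm_mul, norm_mul, hE1, one_mul, one_mul, norm_div, norm_div, Complex.norm_natCast,
    Complex.norm_natCast]
  have hq1 : (1 : ℝ) ≤ q := by exact_mod_cast Nat.one_le_iff_ne_zero.2 hq
  refine add_le_add ?_ ((div_le_self (norm_nonneg _) hq1).trans hprod)
  rw [div_le_iff₀ hN0]
  refine hsieve.trans ?_
  rw [add_mul, div_mul_cancel₀ _ hN0.ne']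
  refine add_le_add le_rfl ?_
  rw [mul_right_comm]
  refine mul_le_mul_of_nonneg_right (mul_le_mul_of_nonneg_left (Real.exp_le_exp.2 ?_) ?_) hN0.le
  · refine add_le_add le_rfl (mul_le_mul_of_nonneg_right (mul_le_mul_of_nonneg_left ?_ ?_) ?_)
    · rwa [hθdef, abs_div, abs_of_pos hs0] at huθ
    · positivity
    · exact Finset.sum_nonneg fun _ _ => by positivity
  · norm_num

/-! ### The full count over multiples of `q` -/

/-- The normalised number of prime factors `(ω(n) - log log n) / √(log log n)`; its values at `n ≤ 2`
are junk, which no average over `n ≤ N` detects in the limit. -/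
noncomputable def stat (n : ℕ) : ℝ := ((n.primeFactors.card : ℝ) - ll n) / √(ll n)

lemma norm_exp_I_sub_le (x y : ℝ) :
    ‖Complex.exp (Complex.I * x) - Complex.exp (Complex.I * y)‖ ≤ |x - y| := by
  have h : Complex.exp (Complex.I * x) - Complex.exp (Complex.I * y)
      = Complex.exp (y * Complex.I) * (Complex.exp (Complex.I * (x - y : ℝ)) - 1) := by
    rw [mul_sub, ← Complex.exp_add, mul_one, mul_comm (y : ℂ)]
    congr 2
    push_cast; ring
  rw [h, norm_mul, Complex.norm_exp_ofReal_mul_I, one_mul]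
  exact Real.norm_exp_I_mul_ofReal_sub_one_le

lemma norm_exp_I_sub_le_two (x y : ℝ) :
    ‖Complex.exp (Complex.I * x) - Complex.exp (Complex.I * y)‖ ≤ 2 := by
  refine (norm_sub_le _ _).trans ?_
  rw [mul_comm, Complex.norm_exp_ofReal_mul_I, mul_comm, Complex.norm_exp_ofReal_mul_I]
  norm_num

lemma sum_omegaIn_le (P : Finset ℕ) (N : ℕ) :
    ∑ n ∈ Finset.Icc 1 N, (omegaIn P n : ℝ) ≤ N * ∑ p ∈ P, (1 / p : ℝ) := by
  have h : ∑ n ∈ Finset.Icc 1 N, omegaIn P n = ∑ p ∈ P, N / p := by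
    simp only [omegaIn, Finset.card_filter]
    rw [Finset.sum_comm]
    refine Finset.sum_congr rfl fun p _ => ?_
    rw [← Finset.card_filter, card_multiples_Icc]
  rw [← Nat.cast_sum, h, Nat.cast_sum, Finset.mul_sum]
  refine Finset.sum_le_sum fun p _ => ?_
  rw [mul_one_div]
  exact Nat.cast_div_le

lemma card_primeFactors_eq_omegaIn {n N : ℕ} (hn : n ∈ Finset.Icc 1 N) :
    n.primeFactors.card = omegaIn (Nat.primesLE N) n := by
  rw [Finset.mem_Icc] at hn
  rw [omegaIn]
  congr 1
  ext p
  rw [Nat.mem_primeFactors, Finset.mem_filter, Nat.mem_primesLE]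
  constructor
  · rintro ⟨hp, hd, _⟩
    exact ⟨⟨(Nat.le_of_dvd (by omega) hd).trans hn.2, hp⟩, hd⟩
  · rintro ⟨⟨_, hp⟩, hd⟩
    exact ⟨hp, hd, by omega⟩

/-- Replacing the centring `l` by the nearby `m` and the count `w` by the truncated count `v` changes
the normalised count by little. -/
lemma abs_normalised_sub_le {w v l m : ℝ} (hw : 0 ≤ w) (hv : v ≤ w) (hl : 2 ≤ l) (hml : m ≤ l)
    (hm : l - 1 ≤ m) :
    |(w - m) / √m - (v - l) / √l| ≤ 2 * (w / (l * √l)) + 1 / √l + (w - v) / √l := by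
  obtain ⟨s, hs⟩ : ∃ s, s = √l := ⟨_, rfl⟩
  obtain ⟨r, hr⟩ : ∃ r, r = √m := ⟨_, rfl⟩
  have hs0 : 0 < s := hs ▸ Real.sqrt_pos.2 (by linarith)
  have hr0 : 0 < r := hr ▸ Real.sqrt_pos.2 (by linarith)
  have hss : s * s = l := hs ▸ Real.mul_self_sqrt (by linarith)
  have hrr : r * r = m := hr ▸ Real.mul_self_sqrt (by linarith)
  rw [← hs, ← hr, ← hss, ← hrr]
  rw [← hss, ← hrr] at hml hm
  rw [← hss] at hl
  have hrs : r ≤ s := by nlinarith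
  have h2r : s ≤ 2 * r := by nlinarith
  have hd : (s - r) ≤ 1 / s := by
    rw [le_div_iff₀ hs0]; nlinarith
  have hinv : 1 / r - 1 / s ≤ 2 * (1 / (s * s * s)) := by
    have : 1 / r - 1 / s = (s - r) / (r * s) := by field_simp
    rw [this, div_le_iff₀ (by positivity)]
    have h3 : 2 * (1 / (s * s * s)) * (r * s) = 2 * r / s * (1 / s) := by field_simp
    rw [h3]
    refine hd.trans (le_mul_of_one_le_left (by positivity) ?_)
    rwa [one_le_div hs0]
  have hinv0 : 0 ≤ 1 / r - 1 / s := sub_nonneg.2 (one_div_le_one_div_of_le hr0 hrs)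
  have hsplit : (w - r * r) / r - (v - s * s) / s
      = w * (1 / r - 1 / s) + (s - r) + (w - v) / s := by field_simp; ring
  have h4 : 0 ≤ (w - v) / s := div_nonneg (by linarith) hs0.le
  rw [hsplit, abs_of_nonneg (by have := mul_nonneg hw hinv0; linarith)]
  have h5 := mul_le_mul_of_nonneg_left hinv hw
  have h6 : w * (2 * (1 / (s * s * s))) = 2 * (w / (s * s * s)) := by ring
  linarith

lemma sievePrimes_subset {q N : ℕ} (h : sieveLevel N ≤ N) : sievePrimes q N ⊆ Nat.primesLE N := by
  intro p hp
  have := (Finset.mem_filter.1 hp).1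
  rw [Nat.mem_primesLE] at this ⊢
  exact ⟨this.1.trans h, this.2⟩

/-- For `√N < n ≤ N` the double logarithms differ by at most `log 2`, which is less than `1`. -/
lemma ll_bounds {n N : ℕ} (hl : 2 ≤ ll N) (hn : √(N : ℝ) < n) (hnN : n ≤ N) :
    ll n ≤ ll N ∧ ll N - 1 ≤ ll n := by
  have hlogN : 0 < Real.log N := by
    by_contra h
    have h0 : Real.log N = 0 := le_antisymm (not_lt.1 h) (Real.log_natCast_nonneg N)
    rw [ll, h0, Real.log_zero] at hl
    norm_num at hl
  have hN0 : (0 : ℝ) < N := by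
    rcases Nat.eq_zero_or_pos N with h | h
    · simp [h] at hlogN
    · exact_mod_cast h
  have hs : 0 < √(N : ℝ) := Real.sqrt_pos.2 hN0
  have h1 : Real.log N / 2 ≤ Real.log n := by
    rw [← Real.log_sqrt hN0.le]; exact Real.log_le_log hs hn.le
  have h2 : Real.log n ≤ Real.log N := Real.log_le_log (hs.trans hn) (by exact_mod_cast hnN)
  constructor
  · exact Real.log_le_log (by linarith) h2
  · have h3 := Real.log_le_log (by linarith) h1
    rw [Real.log_div hlogN.ne' two_ne_zero] at h3
    have := Real.log_two_lt_d9
    rw [ll, ll]; linarith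

lemma tendsto_inv_sqrt_natCast : Tendsto (fun N : ℕ => (√(N : ℝ))⁻¹) atTop (𝓝 0) :=
  tendsto_inv_atTop_zero.comp (Real.tendsto_sqrt_atTop.comp tendsto_natCast_atTop_atTop)

/-- On average over `n ≤ N`, truncating the count of prime factors and freezing the normalisation at
`N` does not affect the characters. -/
lemma tendsto_mean_truncation {q : ℕ} (hq : q ≠ 0) (t : ℝ) :
    Tendsto (fun N : ℕ => (∑ n ∈ Finset.Icc 1 N, ‖Complex.exp (Complex.I * (t * stat n : ℝ)) -
      Complex.exp (Complex.I * (t * ((omegaIn (sievePrimes q N) n - ll N) / √(ll N)) : ℝ))‖) / N)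
      atTop (𝓝 0) := by
  have hT := tendsto_primeRecipSum
  have hG := tendsto_sieveMean hq
  have hi := tendsto_inv_sqrt_ll
  have hbound : Tendsto (fun N : ℕ => 2 * (√(N : ℝ))⁻¹ + |t| *
      (2 * ((primeRecipSum N - ll N) / √(ll N) * (√(ll N))⁻¹ * (√(ll N))⁻¹ + (√(ll N))⁻¹)
        + (√(ll N))⁻¹ + ((primeRecipSum N - ll N) / √(ll N) - (sieveMean q N - ll N) / √(ll N))))
      atTop (𝓝 0) := by
    simpa using (tendsto_inv_sqrt_natCast.const_mul 2).add
      ((((((hT.mul hi).mul hi).add hi).const_mul 2).add hi).add (hT.sub hG) |>.const_mul |t|)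
  refine squeeze_zero' (Eventually.of_forall fun N => by positivity) ?_ hbound
  filter_upwards [tendsto_ll.eventually_ge_atTop 2, sieveLevel_bounds, eventually_ge_atTop 1]
    with N hl ⟨_, hYN, _⟩ hN
  have hN0 : (0 : ℝ) < N := by exact_mod_cast hN
  have hsub := sievePrimes_subset (q := q) hYN
  set P := sievePrimes q N with hP
  have hlpos : 0 < ll N := by linarith
  have hs0 : 0 < √(ll N) := Real.sqrt_pos.2 hlpos
  -- the primes missed by the truncated count
  have hsplit : ∀ n, omegaIn (Nat.primesLE N) n = omegaIn P n + omegaIn (Nat.primesLE N \ P) n := by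
    intro n
    rw [omegaIn, omegaIn, omegaIn, ← Finset.card_union_of_disjoint, ← Finset.filter_union,
      Finset.union_sdiff_of_subset hsub]
    exact Finset.disjoint_filter_filter Finset.disjoint_sdiff
  -- the `n ≤ √N` are too few to matter; the others have nearly the same normalisation as `N`
  have hpt : ∀ n ∈ Finset.Icc 1 N, ‖Complex.exp (Complex.I * (t * stat n : ℝ)) -
      Complex.exp (Complex.I * (t * ((omegaIn P n - ll N) / √(ll N)) : ℝ))‖
      ≤ (if (n : ℝ) ≤ √N then 2 else 0) + |t| * (2 * (omegaIn (Nat.primesLE N) n / (ll N * √(ll N)))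
        + 1 / √(ll N) + omegaIn (Nat.primesLE N \ P) n / √(ll N)) := by
    intro n hn
    split_ifs with h
    · refine (norm_exp_I_sub_le_two _ _).trans ?_
      have : 0 ≤ |t| * (2 * (omegaIn (Nat.primesLE N) n / (ll N * √(ll N)))
        + 1 / √(ll N) + omegaIn (Nat.primesLE N \ P) n / √(ll N)) := by positivity
      linarith
    · rw [zero_add]
      refine (norm_exp_I_sub_le _ _).trans ?_
      rw [← mul_sub, abs_mul]
      refine mul_le_mul_of_nonneg_left ?_ (abs_nonneg t)
      obtain ⟨h1, h2⟩ := ll_bounds hl (not_le.1 h) (Finset.mem_Icc.1 hn).2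
      have hω := card_primeFactors_eq_omegaIn hn
      have hs := hsplit n
      have h3 : (omegaIn (Nat.primesLE N \ P) n : ℝ) = omegaIn (Nat.primesLE N) n - omegaIn P n := by
        rw [hs]; push_cast; ring
      rw [h3, stat, hω]
      refine abs_normalised_sub_le (by positivity) ?_ hl h1 h2
      exact_mod_cast hs ▸ Nat.le_add_right _ _
  refine (div_le_div_of_nonneg_right (Finset.sum_le_sum hpt) hN0.le).trans ?_
  rw [Finset.sum_add_distrib, ← Finset.mul_sum, Finset.sum_add_distrib, Finset.sum_add_distrib,
    ← Finset.mul_sum, ← Finset.sum_div, ← Finset.sum_div, ← Finset.sum_div, Finset.sum_const,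
    Nat.card_Icc, Nat.add_sub_cancel, nsmul_eq_mul]
  have hsmall : ∑ n ∈ Finset.Icc 1 N, (if (n : ℝ) ≤ √N then (2 : ℝ) else 0) ≤ 2 * √N := by
    rw [← Finset.sum_filter, Finset.sum_const, nsmul_eq_mul, mul_comm]
    refine mul_le_mul_of_nonneg_left ?_ zero_le_two
    refine le_trans ?_ (Nat.floor_le (Real.sqrt_nonneg (N : ℝ)))
    have : (Finset.Icc 1 N).filter (fun n : ℕ => (n : ℝ) ≤ √N) ⊆ Finset.Icc 1 ⌊√(N : ℝ)⌋₊ := by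
      intro n hn
      rw [Finset.mem_filter, Finset.mem_Icc] at hn
      exact Finset.mem_Icc.2 ⟨hn.1.1, Nat.le_floor hn.2⟩
    have h2 := Finset.card_le_card this
    rw [Nat.card_Icc, Nat.add_sub_cancel] at h2
    exact_mod_cast h2
  have hA := sum_omegaIn_le (Nat.primesLE N) N
  change _ ≤ _ * primeRecipSum N at hA
  have hB := sum_omegaIn_le (Nat.primesLE N \ P) N
  rw [Finset.sum_sdiff_eq_sub hsub] at hB
  change _ ≤ _ * (primeRecipSum N - sieveMean q N) at hB
  rw [div_le_iff₀ hN0]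
  set A := ∑ n ∈ Finset.Icc 1 N, (omegaIn (Nat.primesLE N) n : ℝ)
  set B := ∑ n ∈ Finset.Icc 1 N, (omegaIn (Nat.primesLE N \ P) n : ℝ)
  calc _ ≤ 2 * √N + |t| * (2 * ((N * primeRecipSum N) / (ll N * √(ll N))) + N * 1 / √(ll N)
        + (N * (primeRecipSum N - sieveMean q N)) / √(ll N)) := by gcongr
    _ = _ := by
        have hlC := Real.mul_self_sqrt hlpos.le
        have hNs := Real.mul_self_sqrt hN0.le
        have hsN : √(N : ℝ) ≠ 0 := (Real.sqrt_pos.2 hN0).ne'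
        set s := √(ll N)
        set r := √(N : ℝ)
        rw [← hlC, ← hNs]
        field_simp
        ring

/-- Uniformly distributed multiples of `q` have asymptotically Gaussian characters. -/
lemma tendsto_mean_multiples {q : ℕ} (hq : q ≠ 0) (t : ℝ) :
    Tendsto (fun N : ℕ => (∑ n ∈ (Finset.Icc 1 N).filter (q ∣ ·),
      (Complex.exp (Complex.I * (t * stat n : ℝ)) - Complex.exp (-(t ^ 2 / 2 : ℝ)))) / N)
      atTop (𝓝 0) := by
  have h1 := tendsto_mean_sieved hq t
  have h2 : Tendsto (fun N : ℕ => (∑ n ∈ (Finset.Icc 1 N).filter (q ∣ ·),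
      (Complex.exp (Complex.I * (t * stat n : ℝ)) - Complex.exp (Complex.I *
        (t * ((omegaIn (sievePrimes q N) n - ll N) / √(ll N)) : ℝ)))) / N) atTop (𝓝 0) := by
    refine squeeze_zero_norm (fun N => ?_) (tendsto_mean_truncation hq t)
    rw [norm_div, Complex.norm_natCast]
    refine div_le_div_of_nonneg_right ?_ (Nat.cast_nonneg N)
    refine (norm_sum_le _ _).trans ?_
    exact Finset.sum_le_sum_of_subset_of_nonneg (Finset.filter_subset _ _)
      fun _ _ _ => norm_nonneg _
  have h3 : Tendsto (fun N : ℕ => ((N / q : ℕ) : ℂ) / N) atTop (𝓝 (1 / q)) := by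
    have h := (tendsto_nat_floor_mul_div_atTop (R := ℝ) (a := 1 / (q : ℝ)) (by positivity)).comp
      tendsto_natCast_atTop_atTop
    have h' := (Complex.continuous_ofReal.tendsto _).comp h
    have e : ((1 / q : ℝ) : ℂ) = 1 / q := by push_cast; rfl
    rw [e] at h'
    refine h'.congr fun N => ?_
    simp only [Function.comp]
    rw [one_div_mul_eq_div, Nat.floor_div_eq_div]
    push_cast; rfl
  have h4 := (h1.add h2).sub (h3.const_mul (Complex.exp (-(t ^ 2 / 2 : ℝ))))
  have e : Complex.exp (-(t ^ 2 / 2 : ℝ)) / q + 0 - Complex.exp (-(t ^ 2 / 2 : ℝ)) * (1 / q) = 0 := by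
    ring
  rw [e] at h4
  refine h4.congr fun N => ?_
  simp only [Finset.sum_sub_distrib, Finset.sum_const, card_multiples_Icc, nsmul_eq_mul]
  ring

/-! ### Passage to `h`-free integers -/

open Classical in
/-- The `h`-free integers in `[1, N]`. -/
noncomputable def hfreeUpTo (h N : ℕ) : Finset ℕ :=
  (Finset.Icc 1 N).filter (fun n => ∀ p : ℕ, p.Prime → ¬ p ^ h ∣ n)

open Classical in
/-- The integers in `[1, N]` not divisible by `p ^ h` for any prime `p ≤ z`. -/
noncomputable def hfreeSifted (h z N : ℕ) : Finset ℕ :=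
  (Finset.Icc 1 N).filter (fun n => ∀ p ∈ Nat.primesLE z, ¬ p ^ h ∣ n)

lemma hfreeUpTo_subset (h z N : ℕ) : hfreeUpTo h N ⊆ hfreeSifted h z N := by
  classical
  intro n hn
  rw [hfreeUpTo, Finset.mem_filter] at hn
  rw [hfreeSifted, Finset.mem_filter]
  exact ⟨hn.1, fun p hp => hn.2 p (Nat.prime_of_mem_primesLE hp)⟩

/-- An integer that passes the sieve up to `z` but is not `h`-free is divisible by `m ^ 2` for some
`m > z`. -/
lemma card_hfreeSifted_sdiff_le {h : ℕ} (hh : 2 ≤ h) (z N : ℕ) :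
    ((hfreeSifted h z N \ hfreeUpTo h N).card : ℝ) ≤ N * ∑ m ∈ Finset.Ioc z N, ((m : ℝ) ^ 2)⁻¹ := by
  have hsub : hfreeSifted h z N \ hfreeUpTo h N
      ⊆ (Finset.Ioc z N).biUnion fun m => (Finset.Icc 1 N).filter (m ^ 2 ∣ ·) := by
    intro n hn
    simp only [hfreeSifted, hfreeUpTo, Finset.mem_sdiff, Finset.mem_filter, not_and, not_forall,
      not_not] at hn
    obtain ⟨⟨hnN, hz⟩, hp⟩ := hn
    obtain ⟨p, hp, hpn⟩ := hp hnN
    have h2 : p ^ 2 ∣ n := (pow_dvd_pow p hh).trans hpn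
    rw [Finset.mem_biUnion]
    refine ⟨p, Finset.mem_Ioc.2 ⟨?_, ?_⟩, Finset.mem_filter.2 ⟨hnN, h2⟩⟩
    · by_contra hlt
      exact hz p (Nat.mem_primesLE.2 ⟨not_lt.1 hlt, hp⟩) hpn
    · rw [Finset.mem_Icc] at hnN
      exact (Nat.le_of_dvd hnN.1 ((dvd_pow_self p two_ne_zero).trans h2)).trans hnN.2
  have h1 := (Finset.card_le_card hsub).trans Finset.card_biUnion_le
  refine (Nat.cast_le.2 h1).trans ?_
  rw [Nat.cast_sum, Finset.mul_sum]
  refine Finset.sum_le_sum fun m _ => ?_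
  rw [card_multiples_Icc, ← div_eq_mul_inv]
  exact_mod_cast Nat.cast_div_le

/-- A quarter of the integers up to `N` are `h`-free, since `∑_{m ≥ 2} 1 / m ^ 2 ≤ 3 / 4`. -/
lemma quarter_le_card_hfreeUpTo {h : ℕ} (hh : 2 ≤ h) {N : ℕ} (hN : 2 ≤ N) :
    (N : ℝ) / 4 ≤ (hfreeUpTo h N).card := by
  have h1 := card_hfreeSifted_sdiff_le hh 1 N
  have h0 : hfreeSifted h 1 N = Finset.Icc 1 N := by
    rw [hfreeSifted, Finset.filter_true_of_mem]
    intro n _ p hp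
    rw [Nat.mem_primesLE] at hp
    exact absurd hp.2.two_le (by omega)
  have h2 : ∑ m ∈ Finset.Ioc 1 N, ((m : ℝ) ^ 2)⁻¹ ≤ 3 / 4 := by
    have h3 := sum_Ioc_inv_sq_le_sub (α := ℝ) two_ne_zero hN
    have h4 : Finset.Ioc 1 N = insert 2 (Finset.Ioc 2 N) := by
      ext m; simp only [Finset.mem_Ioc, Finset.mem_insert]; omega
    rw [h4, Finset.sum_insert (by simp)]
    have : (0 : ℝ) ≤ (N : ℝ)⁻¹ := by positivity
    norm_num at h3 ⊢
    linarith
  have hN0 : (0 : ℝ) ≤ N := Nat.cast_nonneg N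
  have h5 := mul_le_mul_of_nonneg_left h2 hN0
  have h6 := Finset.card_sdiff_add_card_eq_card (hfreeUpTo_subset h 1 N)
  rw [h0, Nat.card_Icc, Nat.add_sub_cancel] at h6
  rw [h0] at h1
  have h7 : (((Finset.Icc 1 N \ hfreeUpTo h N).card : ℕ) : ℝ) + (hfreeUpTo h N).card = N := by
    exact_mod_cast h6
  linarith

/-- Inclusion-exclusion over the primes up to `z`. -/
lemma sum_hfreeSifted (h z N : ℕ) (c : ℕ → ℂ) :
    ∑ n ∈ hfreeSifted h z N, c n = ∑ T ∈ (Nat.primesLE z).powerset, (-1) ^ T.card *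
      ∑ n ∈ (Finset.Icc 1 N).filter ((∏ p ∈ T, p ^ h) ∣ ·), c n := by
  classical
  have hind : ∀ n, (if ∀ p ∈ Nat.primesLE z, ¬ p ^ h ∣ n then (1 : ℂ) else 0)
      = ∑ T ∈ (Nat.primesLE z).powerset, (-1) ^ T.card *
        (if (∏ p ∈ T, p ^ h) ∣ n then 1 else 0) := by
    intro n
    have h1 : (if ∀ p ∈ Nat.primesLE z, ¬ p ^ h ∣ n then (1 : ℂ) else 0)
        = ∏ p ∈ Nat.primesLE z, (1 - if p ^ h ∣ n then (1 : ℂ) else 0) := by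
      have h0 := Finset.prod_ite_zero (s := Nat.primesLE z) (p := fun p => ¬ p ^ h ∣ n)
        (f := fun _ => (1 : ℂ))
      rw [Finset.prod_const_one] at h0
      rw [← h0]
      refine Finset.prod_congr rfl fun p _ => ?_
      by_cases hd : p ^ h ∣ n <;> simp [hd]
    rw [h1]
    simp only [sub_eq_add_neg]
    rw [Finset.prod_one_add]
    refine Finset.sum_congr rfl fun T hT => ?_
    rw [Finset.prod_neg, Finset.prod_ite_zero, Finset.prod_const_one]
    congr 2
    refine propext ⟨fun hd => ?_, fun hd p hp => (Finset.dvd_prod_of_mem _ hp).trans hd⟩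
    refine Finset.prod_dvd_of_isRelPrime ?_ hd
    intro p hp r hr hpr
    have hp' := Nat.prime_of_mem_primesLE (Finset.mem_powerset.1 hT hp)
    have hr' := Nat.prime_of_mem_primesLE (Finset.mem_powerset.1 hT hr)
    exact (Nat.coprime_iff_isRelPrime.1 (((Nat.coprime_primes hp' hr').2 hpr).pow h h))
  rw [hfreeSifted, Finset.sum_filter]
  calc _ = ∑ n ∈ Finset.Icc 1 N, (∑ T ∈ (Nat.primesLE z).powerset, (-1) ^ T.card *
        (if (∏ p ∈ T, p ^ h) ∣ n then 1 else 0)) * c n := by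
        refine Finset.sum_congr rfl fun n _ => ?_
        rw [← hind]; split_ifs <;> simp
    _ = _ := by
        simp only [Finset.sum_mul]
        rw [Finset.sum_comm]
        refine Finset.sum_congr rfl fun T _ => ?_
        rw [Finset.sum_filter, Finset.mul_sum]
        refine Finset.sum_congr rfl fun n _ => ?_
        split_ifs <;> simp

/-- The vanishing of the means over multiples of every `q` passes to the `h`-free integers. -/
lemma tendsto_mean_hfree {h : ℕ} (hh : 2 ≤ h) {c : ℕ → ℂ} (hc : ∀ n, ‖c n‖ ≤ 2)
    (hq : ∀ q : ℕ, q ≠ 0 → Tendsto (fun N : ℕ =>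
      (∑ n ∈ (Finset.Icc 1 N).filter (q ∣ ·), c n) / N) atTop (𝓝 0)) :
    Tendsto (fun N : ℕ => (∑ n ∈ hfreeUpTo h N, c n) / N) atTop (𝓝 0) := by
  have hsift : ∀ z, Tendsto (fun N : ℕ => (∑ n ∈ hfreeSifted h z N, c n) / N) atTop (𝓝 0) := by
    intro z
    have h1 : Tendsto (fun N : ℕ => ∑ T ∈ (Nat.primesLE z).powerset, (-1 : ℂ) ^ T.card *
        ((∑ n ∈ (Finset.Icc 1 N).filter ((∏ p ∈ T, p ^ h) ∣ ·), c n) / N)) atTop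
        (𝓝 (∑ T ∈ (Nat.primesLE z).powerset, (-1 : ℂ) ^ T.card * 0)) := by
      refine tendsto_finsetSum _ fun T hT => (hq _ ?_).const_mul _
      refine Finset.prod_ne_zero_iff.2 fun p hp => pow_ne_zero _ ?_
      exact (Nat.prime_of_mem_primesLE (Finset.mem_powerset.1 hT hp)).ne_zero
    simp only [mul_zero, Finset.sum_const_zero] at h1
    refine h1.congr fun N => ?_
    rw [sum_hfreeSifted, Finset.sum_div]
    refine Finset.sum_congr rfl fun T _ => ?_
    ring
  rw [Metric.tendsto_atTop]
  intro ε hε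
  obtain ⟨z, hz⟩ := exists_nat_gt (4 / ε)
  have hz0 : (0 : ℝ) < z := lt_trans (by positivity) hz
  have hz' : z ≠ 0 := by rintro rfl; simp at hz0
  obtain ⟨N₀, hN₀⟩ := Metric.tendsto_atTop.1 (hsift z) (ε / 2) (by positivity)
  refine ⟨max N₀ (max z 1), fun N hN => ?_⟩
  have hN1 := hN₀ N (le_trans (le_max_left _ _) hN)
  have hNz : z ≤ N := le_trans (le_trans (le_max_left _ _) (le_max_right _ _)) hN
  have hN0 : (0 : ℝ) < N := lt_of_lt_of_le hz0 (by exact_mod_cast hNz)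
  rw [dist_zero_right] at hN1 ⊢
  have hsplit := Finset.sum_sdiff (f := c) (hfreeUpTo_subset h z N)
  have hsd : ‖∑ n ∈ hfreeSifted h z N \ hfreeUpTo h N, c n‖ ≤ 2 * (N * (z : ℝ)⁻¹) := by
    refine (norm_sum_le_of_le _ fun n _ => hc n).trans ?_
    rw [Finset.sum_const, nsmul_eq_mul, mul_comm]
    refine mul_le_mul_of_nonneg_left ((card_hfreeSifted_sdiff_le hh z N).trans ?_) zero_le_two
    refine mul_le_mul_of_nonneg_left ?_ hN0.le
    refine (sum_Ioc_inv_sq_le_sub (α := ℝ) hz' hNz).trans ?_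
    have : (0 : ℝ) ≤ (N : ℝ)⁻¹ := by positivity
    linarith
  have hz2 : 2 * (z : ℝ)⁻¹ < ε / 2 := by
    rw [div_lt_iff₀ hε] at hz
    rw [← div_eq_mul_inv, div_lt_iff₀ hz0]
    linarith
  have e : (∑ n ∈ hfreeUpTo h N, c n) / N = (∑ n ∈ hfreeSifted h z N, c n) / N
      - (∑ n ∈ hfreeSifted h z N \ hfreeUpTo h N, c n) / N := by
    rw [← hsplit]; ring
  rw [e]
  refine (norm_sub_le _ _).trans_lt ?_
  have h3 : ‖(∑ n ∈ hfreeSifted h z N \ hfreeUpTo h N, c n) / (N : ℂ)‖ ≤ 2 * (z : ℝ)⁻¹ := by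
    rw [norm_div, Complex.norm_natCast, div_le_iff₀ hN0]
    linarith
  linarith

/-- The characteristic functions of the normalised count on `h`-free integers converge. -/
lemma tendsto_charFun_hfree {h : ℕ} (hh : 2 ≤ h) (t : ℝ) :
    Tendsto (fun N : ℕ => (∑ n ∈ hfreeUpTo h N, Complex.exp (Complex.I * (t * stat n : ℝ)))
      / (hfreeUpTo h N).card) atTop (𝓝 (Complex.exp (-(t ^ 2 / 2 : ℝ)))) := by
  set φ := Complex.exp (-(t ^ 2 / 2 : ℝ)) with hφ
  have hφ1 : ‖φ‖ ≤ 1 := by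
    rw [hφ, ← Complex.ofReal_neg, ← Complex.ofReal_exp, Complex.norm_real,
      Real.norm_of_nonneg (Real.exp_pos _).le, Real.exp_le_one_iff]
    have := sq_nonneg t
    linarith
  have h1 := tendsto_mean_hfree hh
    (c := fun n => Complex.exp (Complex.I * (t * stat n : ℝ)) - φ) (fun n => by
      refine (norm_sub_le _ _).trans ?_
      rw [mul_comm, Complex.norm_exp_ofReal_mul_I]
      linarith) (fun q hq => tendsto_mean_multiples hq t)
  rw [tendsto_iff_norm_sub_tendsto_zero]
  have h2 := (h1.norm).const_mul 4
  rw [norm_zero, mul_zero] at h2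
  refine squeeze_zero' (Eventually.of_forall fun _ => norm_nonneg _) ?_ h2
  filter_upwards [eventually_ge_atTop 2] with N hN
  have hN0 : (0 : ℝ) < N := by exact_mod_cast (by omega : 0 < N)
  have hcard := quarter_le_card_hfreeUpTo hh hN
  have hc0 : (0 : ℝ) < (hfreeUpTo h N).card := lt_of_lt_of_le (by positivity) hcard
  have hcC : ((hfreeUpTo h N).card : ℂ) ≠ 0 := by exact_mod_cast hc0.ne'
  have e : (∑ n ∈ hfreeUpTo h N, Complex.exp (Complex.I * (t * stat n : ℝ)))
      / (hfreeUpTo h N).card - φ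
      = (∑ n ∈ hfreeUpTo h N, (Complex.exp (Complex.I * (t * stat n : ℝ)) - φ))
        / (hfreeUpTo h N).card := by
    rw [Finset.sum_sub_distrib, Finset.sum_const, nsmul_eq_mul]
    field_simp
  rw [e, norm_div, norm_div, Complex.norm_natCast, Complex.norm_natCast, div_le_iff₀ hc0]
  set S := ‖∑ n ∈ hfreeUpTo h N, (Complex.exp (Complex.I * (t * stat n : ℝ)) - φ)‖
  calc S = 4 * (S / N) * (N / 4) := by field_simp
    _ ≤ _ := by gcongr

/-! ### Convergence in distribution -/

open MeasureTheory ProbabilityTheory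

/-- The law of `f n` for `n` uniformly distributed on `s`. -/
noncomputable def empiricalLaw (s : Finset ℕ) (f : ℕ → ℝ) : Measure ℝ :=
  (s.card : ENNReal)⁻¹ • ∑ n ∈ s, Measure.dirac (f n)

lemma isProbabilityMeasure_empiricalLaw {s : Finset ℕ} (hs : s.Nonempty) (f : ℕ → ℝ) :
    IsProbabilityMeasure (empiricalLaw s f) := by
  constructor
  have h0 : (s.card : ENNReal) ≠ 0 := by exact_mod_cast hs.card_pos.ne'
  simp [empiricalLaw, ENNReal.inv_mul_cancel h0]

lemma charFun_empiricalLaw (s : Finset ℕ) (f : ℕ → ℝ) (t : ℝ) :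
    charFun (empiricalLaw s f) t
      = (∑ n ∈ s, Complex.exp (Complex.I * (t * f n : ℝ))) / s.card := by
  have hint : ∀ n ∈ s, Integrable (fun x : ℝ => Complex.exp (t * x * Complex.I))
      (Measure.dirac (f n)) := fun n _ => by
    refine integrable_dirac ?_
    simp
  rw [charFun_apply_real, empiricalLaw, integral_smul_measure, integral_finsetSum_measure hint]
  simp only [integral_dirac, ENNReal.toReal_inv, ENNReal.toReal_natCast]
  rw [Complex.real_smul, div_eq_inv_mul]
  push_cast
  congr 1
  exact Finset.sum_congr rfl fun n _ => by congr 1; ring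

lemma empiricalLaw_Iic (s : Finset ℕ) (f : ℕ → ℝ) (a : ℝ) :
    (empiricalLaw s f).real (Set.Iic a) = ((s.filter (fun n => f n ≤ a)).card : ℝ) / s.card := by
  rw [Measure.real, empiricalLaw, Measure.smul_apply, Measure.finsetSum_apply, smul_eq_mul,
    ENNReal.toReal_mul, ENNReal.toReal_inv, ENNReal.toReal_natCast, div_eq_inv_mul]
  congr 1
  have h : ∀ n, Measure.dirac (f n) (Set.Iic a) = if f n ≤ a then 1 else 0 := fun n => by
    rw [Measure.dirac_apply' _ measurableSet_Iic]
    simp [Set.indicator_apply]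
  simp only [h]
  rw [Finset.sum_boole, ENNReal.toReal_natCast]

lemma gaussCDF_eq (a : ℝ) : gaussCDF a = (gaussianReal 0 1).real (Set.Iic a) := by
  rw [Measure.real, gaussianReal_apply_eq_integral _ one_ne_zero, ENNReal.toReal_ofReal
    (integral_nonneg fun x => gaussianPDFReal_nonneg _ _ _), gaussCDF]
  simp only [gaussianPDFReal, NNReal.coe_one, mul_one, sub_zero]
  rw [integral_const_mul]

lemma one_mem_hfreeUpTo {h : ℕ} (hh : 2 ≤ h) (N : ℕ) : 1 ∈ hfreeUpTo h (N + 1) := by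
  classical
  rw [hfreeUpTo, Finset.mem_filter]
  refine ⟨by simp, fun p hp hd => ?_⟩
  rw [Nat.dvd_one, Nat.pow_eq_one] at hd
  have := hp.one_lt
  omega

/-- Convergence in law, by Lévy's continuity theorem. -/
lemma tendsto_hfree_distribution {h : ℕ} (hh : 2 ≤ h) (a : ℝ) :
    Tendsto (fun N : ℕ => (((hfreeUpTo h N).filter (fun n => stat n ≤ a)).card : ℝ)
      / (hfreeUpTo h N).card) atTop (𝓝 (gaussCDF a)) := by
  rw [← tendsto_add_atTop_iff_nat 1]
  let ν : ℕ → ProbabilityMeasure ℝ := fun N => ⟨empiricalLaw (hfreeUpTo h (N + 1)) stat,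
    isProbabilityMeasure_empiricalLaw ⟨1, one_mem_hfreeUpTo hh N⟩ stat⟩
  let γ : ProbabilityMeasure ℝ := ⟨gaussianReal 0 1, inferInstance⟩
  have hν : Tendsto ν atTop (𝓝 γ) := by
    rw [ProbabilityMeasure.tendsto_iff_tendsto_charFun]
    intro t
    have h1 := (tendsto_add_atTop_iff_nat 1).2 (tendsto_charFun_hfree hh t)
    change Tendsto (fun N => charFun (empiricalLaw (hfreeUpTo h (N + 1)) stat) t) atTop
      (𝓝 (charFun (gaussianReal 0 1) t))
    simp only [charFun_empiricalLaw]
    convert h1 using 2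
    rw [charFun_gaussianReal]
    congr 1
    push_cast
    simp
  have h2 := ProbabilityMeasure.tendsto_measure_of_null_frontier_of_tendsto' hν
    (E := Set.Iic a) (by
      change gaussianReal 0 1 (frontier (Set.Iic a)) = 0
      have := nullSingletonClass_gaussianReal (μ := 0) (v := 1) one_ne_zero
      rw [frontier_Iic]
      exact measure_singleton a)
  rw [gaussCDF_eq]
  have h3 : Tendsto (fun N => (empiricalLaw (hfreeUpTo h (N + 1)) stat).real (Set.Iic a)) atTop
      (𝓝 ((gaussianReal 0 1).real (Set.Iic a))) := by
    exact (ENNReal.tendsto_toReal (measure_ne_top _ _)).comp h2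
  simpa only [empiricalLaw_Iic] using h3

/-- Restricting to `n ≥ 3` changes the count in the numerator by at most `2`. -/
lemma tendsto_hfree_distribution_ge_three {h : ℕ} (hh : 2 ≤ h) (a : ℝ) :
    Tendsto (fun N : ℕ => (((hfreeUpTo h N).filter (fun n => 3 ≤ n ∧ stat n ≤ a)).card : ℝ)
      / (hfreeUpTo h N).card) atTop (𝓝 (gaussCDF a)) := by
  refine (tendsto_hfree_distribution hh a).congr_dist ?_
  have hb : Tendsto (fun N : ℕ => 8 / (N : ℝ)) atTop (𝓝 0) :=
    tendsto_const_nhds.div_atTop tendsto_natCast_atTop_atTop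
  refine squeeze_zero' (Eventually.of_forall fun _ => dist_nonneg) ?_ hb
  filter_upwards [eventually_ge_atTop 2] with N hN
  have hN0 : (0 : ℝ) < N := by exact_mod_cast (by omega : 0 < N)
  have hcard := quarter_le_card_hfreeUpTo hh hN
  have hc0 : (0 : ℝ) < (hfreeUpTo h N).card := lt_of_lt_of_le (by positivity) hcard
  set A := (hfreeUpTo h N).filter (fun n => stat n ≤ a)
  set B := (hfreeUpTo h N).filter (fun n => 3 ≤ n ∧ stat n ≤ a)
  have hBA : B.card ≤ A.card := Finset.card_le_card fun n hn => by
    rw [Finset.mem_filter] at hn ⊢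
    exact ⟨hn.1, hn.2.2⟩
  have hAB : A.card ≤ B.card + 2 := by
    have hsub : A ⊆ B ∪ Finset.Icc 1 2 := fun n hn => by
      classical
      rw [Finset.mem_filter, hfreeUpTo, Finset.mem_filter, Finset.mem_Icc] at hn
      rw [Finset.mem_union, Finset.mem_filter, hfreeUpTo, Finset.mem_filter, Finset.mem_Icc,
        Finset.mem_Icc]
      by_cases h3 : 3 ≤ n
      · exact Or.inl ⟨hn.1, h3, hn.2⟩
      · exact Or.inr ⟨hn.1.1.1, by omega⟩
    refine (Finset.card_le_card hsub).trans ((Finset.card_union_le _ _).trans ?_)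
    simp
  have hBA' : (B.card : ℝ) ≤ A.card := by exact_mod_cast hBA
  have hAB' : (A.card : ℝ) ≤ B.card + 2 := by exact_mod_cast hAB
  rw [Real.dist_eq, ← sub_div, abs_of_nonneg (div_nonneg (by linarith) hc0.le),
    div_le_div_iff₀ hc0 hN0]
  nlinarith

end ErdosKacHFree

/-- Erdős–Kac theorem over `h`-free integers: for `h ≥ 2` and `a ∈ ℝ`, the proportion of
`h`-free integers `n ≤ x` (with `n ≥ 3`) satisfying
`(ω(n) − log log n)/√(log log n) ≤ a` tends to `Φ(a)`. -/
theorem erdosKac_hfree_integers (h : ℕ) (hh : 2 ≤ h) (a : ℝ) :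
    Tendsto (fun x : ℝ =>
        ({n : ℕ | 3 ≤ n ∧ (n : ℝ) ≤ x ∧ (∀ p : ℕ, p.Prime → ¬ p ^ h ∣ n) ∧
            ((n.primeFactors.card : ℝ) - Real.log (Real.log n))
              / Real.sqrt (Real.log (Real.log n)) ≤ a}.ncard : ℝ) /
          ({n : ℕ | 1 ≤ n ∧ (n : ℝ) ≤ x ∧
            ∀ p : ℕ, p.Prime → ¬ p ^ h ∣ n}.ncard : ℝ))
      atTop (nhds (gaussCDF a)) := by
  classical
  have key := (ErdosKacHFree.tendsto_hfree_distribution_ge_three hh a).comp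
    (tendsto_nat_floor_atTop (α := ℝ))
  refine key.congr' ?_
  filter_upwards [eventually_ge_atTop 0] with x hx
  simp only [Function.comp]
  congr 2
  · rw [← Set.ncard_coe_finset]
    congr 1
    ext n
    simp only [ErdosKacHFree.hfreeUpTo, Finset.coe_filter, Finset.mem_filter, Finset.mem_Icc,
      Set.mem_ofPred_eq, Nat.le_floor_iff hx]
    constructor
    · rintro ⟨⟨⟨_, h1⟩, h2⟩, h3, h4⟩
      exact ⟨h3, h1, h2, h4⟩
    · rintro ⟨h3, h1, h2, h4⟩
      exact ⟨⟨⟨by omega, h1⟩, h2⟩, h3, h4⟩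
  · rw [← Set.ncard_coe_finset]
    congr 1
    ext n
    simp only [ErdosKacHFree.hfreeUpTo, Finset.coe_filter, Finset.mem_Icc,
      Set.mem_ofPred_eq, Nat.le_floor_iff hx, and_assoc]
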